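/- For every integer n ≥ 3, the expected number of Yang–Baxter moves in a uniformly random reduced decomposition of the longest element w_0^B ∈ B_n equals 2 − 4/n; equivalently, n · Σ_{ω ∈ R(w_0^B)} yb(ω) = (2n − 4) · |R(w_0^B)|, where yb(ω) denotes the number of Yang–Baxter moves in ω. -/

import Mathlib

/-- The generator `sᵢ` of the hyperoctahedral group `Bₙ`, realized as a permutation of `ℤ`:
`s₀` swaps `1` and `-1`; for `i ≥ 1`, `sᵢ` swaps `i` with `i+1` and `-i` with `-(i+1)`,
fixing all other integers. -/
def sB (i : ℕ) : Equiv.Perm ℤ :=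
  if i = 0 then Equiv.swap 1 (-1)
  else Equiv.swap (i : ℤ) ((i : ℤ) + 1) * Equiv.swap (-(i : ℤ)) (-((i : ℤ) + 1))

/-- The product `s_{i₁} ⋯ s_{i_ℓ}` corresponding to the word `i₁ ⋯ i_ℓ`. -/
def wordProd (l : List ℕ) : Equiv.Perm ℤ := (l.map sB).prod

/-- The underlying function of the longest element `w₀ᴮ ∈ Bₙ`: `i ↦ -i` on `{-n, …, n}`,
fixing all other integers. -/
def w0BFun (n : ℕ) : ℤ → ℤ := fun i => if -(n : ℤ) ≤ i ∧ i ≤ (n : ℤ) then -i else i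

lemma w0BFun_involutive (n : ℕ) : Function.Involutive (w0BFun n) := by
  intro i
  unfold w0BFun
  split_ifs <;> omega

/-- The longest element `w₀ᴮ ∈ Bₙ`, as a permutation of `ℤ`. -/
def w0B (n : ℕ) : Equiv.Perm ℤ := (w0BFun_involutive n).toPerm

/-- `l` is a reduced decomposition of `w` in `Bₙ`: a word over the alphabet `{0, …, n-1}`
whose product of generators is `w`, of minimal length among all such words. -/
def IsReducedWord (n : ℕ) (w : Equiv.Perm ℤ) (l : List ℕ) : Prop :=
  (∀ i ∈ l, i < n) ∧ wordProd l = w ∧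
    ∀ l' : List ℕ, (∀ i ∈ l', i < n) → wordProd l' = w → l.length ≤ l'.length

/-- `R(w)`, the set of reduced decompositions of `w` in `Bₙ`. -/
def RSet (n : ℕ) (w : Equiv.Perm ℤ) : Set (List ℕ) := {l | IsReducedWord n w l}

/-- The length `ℓ(w)` of `w ∈ Bₙ`: the minimal length of a word over `{0, …, n-1}`
whose product of generators is `w`. -/
noncomputable def lenB (n : ℕ) (w : Equiv.Perm ℤ) : ℕ :=
  sInf {m : ℕ | ∃ l : List ℕ, (∀ i ∈ l, i < n) ∧ wordProd l = w ∧ l.length = m}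

/-- Whether a word begins with `k (k+1) k` or `(k+1) k (k+1)` for some `k ≥ 1`. -/
def isYB : List ℕ → Bool
  | a :: b :: c :: _ => (a != 0 && b == a + 1 && c == a) || (b != 0 && a == b + 1 && c == b + 1)
  | _ => false

/-- The number of Yang–Baxter moves in a word. -/
def ybCount (l : List ℕ) : ℕ :=
  ((Finset.range l.length).filter fun j => isYB (l.drop j) = true).card

/-- Whether a word begins with `0101` or `1010`. -/
def is01 : List ℕ → Bool
  | a :: b :: c :: d :: _ =>
      (a == 0 && b == 1 && c == 0 && d == 1) || (a == 1 && b == 0 && c == 1 && d == 0)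
  | _ => false

/-- The number of 01 moves in a word. -/
def m01Count (l : List ℕ) : ℕ :=
  ((Finset.range l.length).filter fun j => is01 (l.drop j) = true).card

/-- The underlying function of `w_k ∈ Bₙ`: `k ↦ -(k+2)`, `k+2 ↦ -k`, and `i ↦ -i` for all
other `i ∈ {1, …, n}`, extended by `w(-i) = -w(i)` and fixing all integers outside
`{-n, …, -1, 1, …, n}`. -/
def wkFun (n k : ℕ) : ℤ → ℤ := fun i =>
  if -(n : ℤ) ≤ i ∧ i ≤ (n : ℤ) then
    if i = (k : ℤ) then -((k : ℤ) + 2)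
    else if i = (k : ℤ) + 2 then -(k : ℤ)
    else if i = -(k : ℤ) then (k : ℤ) + 2
    else if i = -((k : ℤ) + 2) then (k : ℤ)
    else -i
  else i

/-- The underlying function of `w' ∈ Bₙ`: `1 ↦ 1`, `2 ↦ 2`, and `i ↦ -i` for `3 ≤ i ≤ n`,
extended by `w(-i) = -w(i)` and fixing all integers outside `{-n, …, -1, 1, …, n}`. -/
def wpFun (n : ℕ) : ℤ → ℤ := fun i =>
  if (-(n : ℤ) ≤ i ∧ i ≤ (n : ℤ)) ∧ (i < -2 ∨ 2 < i) then -i else i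

/-- `w`, viewed as a signed permutation of `{1, …, n}` via the values `w(1), …, w(n)`,
contains the signed pattern `p` (given by its list of values `p(1), …, p(m)`). -/
def ContainsPattern (n : ℕ) (w : ℤ → ℤ) (p : List ℤ) : Prop :=
  ∃ j : Fin p.length → ℤ, StrictMono j ∧ (∀ r, 1 ≤ j r ∧ j r ≤ (n : ℤ)) ∧
    (∀ r s, w (j r) < w (j s) ↔ p.get r < p.get s) ∧
    (∀ r, w (j r) < 0 ↔ p.get r < 0)

section
open Finset

namespace YB

/-- weight product -/
noncomputable def Wt (u c : ℕ → ℚ) (n i : ℕ) : ℚ :=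
  ∏ j ∈ (range n).erase i, (u i - u j - c j) / (u i - u j)

noncomputable def Ft (u c : ℕ → ℚ) (n : ℕ) (x : ℚ) : ℚ :=
  ∏ j ∈ range n, (x - u j - c j) / (x - u j)

lemma erase_succ {n i : ℕ} (hi : i < n) :
    (range (n+1)).erase i = insert n ((range n).erase i) := by
  ext j; simp only [mem_erase, mem_range, mem_insert]; omega

lemma Wt_succ (u c : ℕ → ℚ) {n i : ℕ} (hi : i < n) :
    Wt u c (n+1) i = (u i - u n - c n) / (u i - u n) * Wt u c n i := by
  unfold Wt
  rw [erase_succ hi, prod_insert (by simp)]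

lemma Wt_last (u c : ℕ → ℚ) (n : ℕ) : Wt u c (n+1) n = Ft u c n (u n) := by
  unfold Wt Ft
  congr 1
  ext j; simp only [mem_erase, mem_range]; omega

lemma Ft_eq (u c : ℕ → ℚ) (n : ℕ) (hu : ∀ i < n, ∀ j < n, i ≠ j → u i ≠ u j) :
    ∀ x : ℚ, (∀ j < n, x ≠ u j) →
      Ft u c n x = 1 - ∑ i ∈ range n, c i * Wt u c n i / (x - u i) := by
  induction n with
  | zero => intro x _; simp [Ft]
  | succ n ih =>
    intro x hx
    have ih' := ih (fun i hi j hj => hu i (by omega) j (by omega))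
    have h1 : Ft u c (n+1) x = Ft u c n x * ((x - u n - c n) / (x - u n)) := by
      unfold Ft; rw [prod_range_succ]
    rw [h1, ih' x (fun j hj => hx j (by omega)), sum_range_succ, Wt_last,
      ih' (u n) (fun j hj => hu n (by omega) j (by omega) (by omega))]
    have hxn : x - u n ≠ 0 := sub_ne_zero.2 (hx n (by omega))
    have h2 : ∑ i ∈ range n, c i * Wt u c (n+1) i / (x - u i)
      = (∑ i ∈ range n, c i * Wt u c n i / (x - u i)) * ((x - u n - c n) / (x - u n))
        + (∑ i ∈ range n, c i * Wt u c n i / (u n - u i)) * (c n / (x - u n)) := by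
      rw [sum_mul, sum_mul, ← sum_add_distrib]
      refine sum_congr rfl fun i hi => ?_
      have hi := mem_range.1 hi
      rw [Wt_succ u c hi]
      have a1 : x - u i ≠ 0 := sub_ne_zero.2 (hx i (by omega))
      have a2 : u n - u i ≠ 0 := sub_ne_zero.2 (hu n (by omega) i (by omega) (by omega))
      have a3 : u i - u n ≠ 0 := sub_ne_zero.2 (hu i (by omega) n (by omega) (by omega))
      rw [show u i - u n = -(u n - u i) by ring]
      field_simp
      ring
    rw [h2]
    field_simp
    ring

lemma S01 (u c : ℕ → ℚ) (n : ℕ) (hu : ∀ i < n, ∀ j < n, i ≠ j → u i ≠ u j) :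
    ∑ i ∈ range n, c i * Wt u c n i = ∑ i ∈ range n, c i ∧
    ∑ i ∈ range n, c i * u i * Wt u c n i =
      ∑ i ∈ range n, (c i * u i - c i * ∑ j ∈ range i, c j) := by
  induction n with
  | zero => simp
  | succ n ih =>
    obtain ⟨i0, i1⟩ := ih (fun i hi j hj => hu i (by omega) j (by omega))
    have hF := Ft_eq u c n (fun i hi j hj => hu i (by omega) j (by omega)) (u n)
      (fun j hj => hu n (by omega) j (by omega) (by omega))
    constructor
    · rw [sum_range_succ, sum_range_succ _ n, ← i0, Wt_last, hF]
      have h2 : ∑ i ∈ range n, c i * Wt u c (n+1) i = (∑ i ∈ range n, c i * Wt u c n i) 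
        + c n * ∑ i ∈ range n, c i * Wt u c n i / (u n - u i) := by
        rw [mul_sum, ← sum_add_distrib]
        refine sum_congr rfl fun i hi => ?_
        have hi := mem_range.1 hi
        rw [Wt_succ u c hi]
        have a2 : u n - u i ≠ 0 := sub_ne_zero.2 (hu n (by omega) i (by omega) (by omega))
        rw [show u i - u n = -(u n - u i) by ring]
        field_simp
        ring
      rw [h2]; ring
    · rw [sum_range_succ, sum_range_succ _ n, ← i1, Wt_last, hF, ← i0]
      have h2 : ∑ i ∈ range n, c i * u i * Wt u c (n+1) i =
        (∑ i ∈ range n, c i * u i * Wt u c n i) 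
        + c n * u n * (∑ i ∈ range n, c i * Wt u c n i / (u n - u i))
        - c n * ∑ i ∈ range n, c i * Wt u c n i := by
        rw [mul_sum, mul_sum, ← sum_add_distrib, ← sum_sub_distrib]
        refine sum_congr rfl fun i hi => ?_
        have hi := mem_range.1 hi
        rw [Wt_succ u c hi]
        have a2 : u n - u i ≠ 0 := sub_ne_zero.2 (hu n (by omega) i (by omega) (by omega))
        rw [show u i - u n = -(u n - u i) by ring]
        field_simp
        ring
      rw [h2]; ring

/-- Thrall's product -/
noncomputable def TH (a : ℕ → ℕ) : ℕ → ℚ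
  | 0 => 1
  | n+1 => TH a n * (((a n).factorial : ℚ)⁻¹ *
      ∏ j ∈ range n, ((a n : ℚ) - a j) / ((a n : ℚ) + a j))

lemma TH_congr {a b : ℕ → ℕ} {n : ℕ} (h : ∀ i < n, a i = b i) : TH a n = TH b n := by
  induction n with
  | zero => rfl
  | succ n ih =>
    simp only [TH]
    rw [ih (fun i hi => h i (by omega)), h n (by omega)]
    congr 2
    refine prod_congr rfl fun j hj => ?_
    rw [h j (by have := mem_range.1 hj; omega)]

lemma TH_pos {a : ℕ → ℕ} {n : ℕ} (h : ∀ i < n, ∀ j < i, a j < a i) : 0 < TH a n := by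
  induction n with
  | zero => simp [TH]
  | succ n ih =>
    simp only [TH]
    refine mul_pos (ih fun i hi => h i (by omega)) (mul_pos (by positivity) ?_)
    refine prod_pos fun j hj => ?_
    have := h n (by omega) j (mem_range.1 hj)
    have : (a j : ℚ) < a n := by exact_mod_cast this
    have h0 : (0:ℚ) ≤ a j := by positivity
    apply div_pos <;> linarith

lemma TH_update (a : ℕ → ℕ) (n i x : ℕ) (hi : i < n)
    (hne : ∀ j < n, j ≠ i → a i ≠ a j) (hpos : ∀ j < n, j ≠ i → a i + a j ≠ 0) :
    TH (Function.update a i x) n = TH a n * ((a i).factorial / x.factorial *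
      ∏ j ∈ (range n).erase i, (((x:ℚ) - a j) * (a i + a j)) / (((x:ℚ) + a j) * (a i - a j))) := by
  induction n with
  | zero => omega
  | succ n ih =>
    simp only [TH]
    rcases Nat.lt_succ_iff_lt_or_eq.1 hi with h | h
    · rw [ih h (fun j hj => hne j (by omega)) (fun j hj => hpos j (by omega)),
        erase_succ h, prod_insert (by simp), Function.update_of_ne (by omega)]
      rw [← mul_prod_erase (range n) _ (mem_range.2 h), ← mul_prod_erase (range n) _ (mem_range.2 h)]
      have e : ∏ j ∈ (range n).erase i, ((a n:ℚ) - (Function.update a i x j : ℕ)) / ((a n:ℚ) + (Function.update a i x j : ℕ))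
        = ∏ j ∈ (range n).erase i, ((a n:ℚ) - a j) / ((a n:ℚ) + a j) := by
        refine prod_congr rfl fun j hj => ?_
        rw [Function.update_of_ne (ne_of_mem_erase hj)]
      rw [e, Function.update_self]
      have h1 : (a i : ℚ) - a n ≠ 0 := by
        have := hne n (by omega) (by omega)
        rw [sub_ne_zero]; exact_mod_cast this
      have h2 : (a i : ℚ) + a n ≠ 0 := by
        have := hpos n (by omega) (by omega)
        exact_mod_cast this
      have key : ((a n : ℚ) - x)/(a n + x) = ((a n - a i)/(a n + a i)) * (((x:ℚ) - a n) * (a i + a n) / ((x + a n) * (a i - a n))) := by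
        rw [show (a n:ℚ) + a i = a i + a n by ring, show (a n:ℚ) - a i = -(a i - a n) by ring,
          show (x:ℚ) + a n = a n + x by ring]
        rcases eq_or_ne ((a n:ℚ) + x) 0 with h0 | h0
        · simp [h0]
        · field_simp
          ring
      rw [key]; ring
    · subst h
      rw [Function.update_self]
      have e : (range (i+1)).erase i = range i := by
        ext j; simp only [mem_erase, mem_range]; omega
      rw [e]
      have e1 : TH (Function.update a i x) i = TH a i :=
        TH_congr fun j hj => Function.update_of_ne (by omega) _ _
      have e2 : ∏ j ∈ range i, ((x:ℚ) - (Function.update a i x j : ℕ)) / ((x:ℚ) + (Function.update a i x j : ℕ))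
         = (∏ j ∈ range i, ((a i:ℚ) - a j) / ((a i:ℚ) + a j)) * 
          ∏ j ∈ range i, (((x:ℚ) - a j) * (a i + a j)) / (((x:ℚ) + a j) * (a i - a j)) := by
        rw [← prod_mul_distrib]
        refine prod_congr rfl fun j hj => ?_
        have hj := mem_range.1 hj
        rw [Function.update_of_ne (by omega)]
        have h1 : (a i : ℚ) - a j ≠ 0 := by
          have := hne j (by omega) (by omega)
          rw [sub_ne_zero]; exact_mod_cast this
        have h2 : (a i : ℚ) + a j ≠ 0 := by
          have := hpos j (by omega) (by omega)
          exact_mod_cast this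
        rcases eq_or_ne ((x:ℚ) + a j) 0 with h0 | h0
        · simp [h0]
        · field_simp
      rw [e1, e2]
      have : ((a i).factorial : ℚ) ≠ 0 := by positivity
      field_simp

lemma thrall (a : ℕ → ℕ) (n : ℕ) (hp : ∀ i < n, 0 < a i) (h : ∀ i < n, ∀ j < i, a j < a i) :
    ∑ i ∈ range n, TH (Function.update a i (a i - 1)) n = (∑ i ∈ range n, (a i : ℚ)) * TH a n := by
  have hne : ∀ i < n, ∀ j < n, i ≠ j → a i ≠ a j := by
    intro i hi j hj hij
    rcases lt_or_gt_of_ne hij with h1 | h1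
    · have := h j hj i h1; omega
    · have := h i hi j h1; omega
  have hs := (S01 (fun i => (a i:ℚ) * (a i - 1)) (fun i => 2 * (a i : ℚ)) n ?_).1
  · have : ∀ i ∈ range n, TH (Function.update a i (a i - 1)) n =
      TH a n * (a i * Wt (fun i => (a i:ℚ) * (a i - 1)) (fun i => 2 * (a i : ℚ)) n i) := by
      intro i hi
      have hi := mem_range.1 hi
      rw [TH_update a n i _ hi (fun j hj hji => hne i hi j hj hji.symm)
        (fun j hj _ => by have := hp i hi; omega)]
      obtain ⟨m, hm⟩ : ∃ m, a i = m + 1 := ⟨a i - 1, by have := hp i hi; omega⟩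
      congr 2
      · rw [hm, Nat.add_sub_cancel, Nat.factorial_succ]
        have : (m.factorial : ℚ) ≠ 0 := by positivity
        push_cast; field_simp
      · unfold Wt
        refine prod_congr rfl fun j hj => ?_
        have hmq : (a i : ℚ) = m + 1 := by rw [hm]; push_cast; ring
        have hmr : ((a i - 1 : ℕ) : ℚ) = m := by rw [hm]; simp
        rw [hmr]; simp only [hmq]
        congr 1 <;> ring
    rw [sum_congr rfl this, ← mul_sum, mul_comm]
    congr 1
    have h2 : (2:ℚ) ≠ 0 := by norm_num
    apply mul_left_cancel₀ h2
    rw [mul_sum, mul_sum]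
    simpa [mul_assoc] using hs
  · intro i hi j hj hij e
    have h1 : (a i : ℚ) ≠ a j := by exact_mod_cast hne i hi j hj hij
    have p1 : (1:ℚ) ≤ a i := by exact_mod_cast hp i hi
    have p2 : (1:ℚ) ≤ a j := by exact_mod_cast hp j hj
    have : ((a i : ℚ) - a j) * (a i + a j - 1) = 0 := by linear_combination e
    rcases mul_eq_zero.1 this with h | h
    · exact h1 (by linarith)
    · linarith

/-- odd parts -/
def lam (i : ℕ) : ℕ := 2 * i + 1
def ek (k : ℕ) : ℕ → ℕ := Function.update (Function.update lam k (2*k)) (k+1) (2*k+1)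

lemma ek_eq (n k : ℕ) (hk : 1 ≤ k) (hkn : k + 1 < n) :
    TH (ek k) n = - (TH lam n * ((lam (k+1):ℚ) * (lam (k+1) - 1) * (lam (k+1) - 2) *
      Wt (fun i => (lam i:ℚ) * (lam i - 3)) (fun i => 6 * (lam i : ℚ)) n (k+1))) := by
  unfold ek
  rw [TH_update _ n (k+1) _ hkn, TH_update _ n k _ (by omega)]
  · rw [← mul_prod_erase ((range n).erase k) _ (a := k+1) (by simp; omega)]
    rw [← mul_prod_erase ((range n).erase (k+1)) _ (a := k) (by simp; omega)]
    unfold Wt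
    rw [← mul_prod_erase ((range n).erase (k+1)) _ (a := k) (by simp; omega)]
    rw [erase_right_comm (a := k+1)]
    have hc : ∀ j ∈ ((range n).erase k).erase (k+1), 
      ((((2*k:ℕ):ℚ) - lam j) * (lam k + lam j)) / ((((2*k:ℕ):ℚ) + lam j) * (lam k - lam j)) *
      (((((2*k+1:ℕ):ℚ) - (Function.update lam k (2*k) j : ℕ)) * ((Function.update lam k (2*k) (k+1) : ℕ) + (Function.update lam k (2*k) j : ℕ))) / ((((2*k+1:ℕ):ℚ) + (Function.update lam k (2*k) j : ℕ)) * ((Function.update lam k (2*k) (k+1) : ℕ) - (Function.update lam k (2*k) j : ℕ))))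
      = ((lam (k+1):ℚ) * (lam (k+1) - 3) - (lam j:ℚ) * (lam j - 3) - 6 * lam j) / ((lam (k+1):ℚ) * (lam (k+1) - 3) - (lam j:ℚ) * (lam j - 3)) := by
      intro j hj
      simp only [mem_erase, mem_range] at hj
      rw [Function.update_of_ne hj.2.1, Function.update_of_ne (by omega)]
      simp only [lam]
      push_cast
      have q1 : (k:ℚ) ≠ j := by exact_mod_cast hj.2.1.symm
      have q2 : (k:ℚ) + 1 ≠ j := by exact_mod_cast hj.1.symm
      have a1 : (k:ℚ) - j ≠ 0 := sub_ne_zero.2 q1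
      have a2 : (k:ℚ) + 1 - j ≠ 0 := sub_ne_zero.2 q2
      have a3 : (k:ℚ) + j + 1 ≠ 0 := by positivity
      have a4 : (2*k:ℚ) + (2*j + 1) ≠ 0 := by positivity
      rw [show (2*k:ℚ)+1 - (2*j+1) = 2*(k-j) by ring, show (2*(k+1):ℚ)+1 - (2*j+1) = 2*(k+1-j) by ring,
        show (2*k:ℚ)+1 + (2*j+1) = 2*(k+j+1) by ring,
        show (2 * ((k:ℚ) + 1) + 1) * (2 * (k + 1) + 1 - 3) - (2 * j + 1) * (2 * j + 1 - 3) = 2*(k+1-j)*(2*k + (2*j+1)) by ring]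
      field_simp
      ring
    rw [← prod_congr rfl hc, prod_mul_distrib]
    rw [Function.update_of_ne (by omega : k + 1 ≠ k), Function.update_self]
    simp only [lam]
    have f1 : ((2*k+1).factorial : ℚ) = (2*k+1) * (2*k).factorial := by
      rw [Nat.factorial_succ]; push_cast; ring
    have f2 : ((2*(k+1)+1).factorial : ℚ) = (2*k+3)*(2*k+2)*((2*k+1) * (2*k).factorial) := by
      rw [show 2*(k+1)+1 = 2*k+1+1+1 by ring, Nat.factorial_succ, Nat.factorial_succ, Nat.factorial_succ]; push_cast; ring
    rw [f1, f2]
    have f0 : ((2*k).factorial : ℚ) ≠ 0 := by positivity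
    have hk' : (1:ℚ) ≤ k := by exact_mod_cast hk
    push_cast
    have b1 : (2*k:ℚ) + 1 ≠ 0 := by positivity
    have b2 : (2*k:ℚ) + (2 * (k+1) + 1) ≠ 0 := by positivity
    have b3 : (2*k:ℚ) + 1 + 2 * k ≠ 0 := by positivity
    rw [show (2*(k:ℚ) + 1 - (2*(k+1)+1)) = -2 by ring, show (2*((k:ℚ)+1) + 1 - 2*k) = 3 by ring]
    rw [show (2 * ((k:ℚ) + 1) + 1) * (2 * (k + 1) + 1 - 3) - (2 * k + 1) * (2 * k + 1 - 3) = 2 * (2*k+1+2*k) by ring]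
    field_simp
    ring
  · intro j hj hjk h; simp only [lam] at h; omega
  · intro j hj hjk; simp only [lam]; omega
  · intro j hj hjk h
    rw [Function.update_of_ne (by omega)] at h
    by_cases hj2 : j = k
    · subst hj2; rw [Function.update_self] at h; simp only [lam] at h; omega
    · rw [Function.update_of_ne hj2] at h; simp only [lam] at h; omega
  · intro j hj hjk 
    rw [Function.update_of_ne (by omega)]; simp only [lam]; omega

lemma Wt_one (n : ℕ) : 
    6 * Wt (fun i => (lam i:ℚ) * (lam i - 3)) (fun i => 6 * (lam i : ℚ)) (n+2) 1 = 
      - (2 * (n+3) * (n+2) * (n+1)) := by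
  induction n with
  | zero => 
    have : (range 2).erase 1 = {0} := by decide
    unfold Wt; simp only [zero_add]; rw [this, prod_singleton]; simp [lam]; norm_num
  | succ n ih =>
    rw [Wt_succ _ _ (by omega), mul_left_comm, ih]
    simp only [lam]; push_cast
    have h1 : (n:ℚ) + 1 ≠ 0 := by positivity
    have h2 : (2 * (n+2) + 1 : ℚ) ≠ 0 := by positivity
    rw [show (3:ℚ) * (3-3) - (2 * (n+2)+1) * (2 * (n+2)+1-3) = -((2 * (n+2) + 1)* (2 * (n+1))) by ring]
    field_simp
    ring

lemma final_sum (n : ℕ) (hn : 3 ≤ n) :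
    ∑ k ∈ Ico 1 (n-1), TH (ek k) n = TH lam n * (n * (n^2 - 1) * (n - 2)) := by
  set W := Wt (fun i => (lam i:ℚ) * (lam i - 3)) (fun i => 6 * (lam i : ℚ)) n with hW
  have h1 : ∑ k ∈ Ico 1 (n-1), TH (ek k) n = ∑ k ∈ Ico 1 (n-1), 
      - (TH lam n * ((lam (k+1):ℚ) * (lam (k+1) - 1) * (lam (k+1) - 2) * W (k+1))) := by
    refine sum_congr rfl fun k hk => ?_
    have := mem_Ico.1 hk
    exact ek_eq n k this.1 (by omega)
  have hs := S01 (fun i => (lam i:ℚ) * (lam i - 3)) (fun i => 6 * (lam i : ℚ)) n ?_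
  · have h2 : ∑ i ∈ range n, (lam i:ℚ) * (lam i - 1) * (lam i - 2) * W i
       = - ((n:ℚ)^2 * (n^2-1)) := by
      have e : ∑ i ∈ range n, (lam i:ℚ) * (lam i - 1) * (lam i - 2) * W i 
        = (1/6) * (∑ i ∈ range n, 6 * (lam i : ℚ) * ((lam i:ℚ) * (lam i - 3)) * W i
          + 2 * ∑ i ∈ range n, 6 * (lam i : ℚ) * W i) := by
        rw [mul_sum, ← sum_add_distrib, mul_sum]
        refine sum_congr rfl fun i _ => ?_
        ring
      rw [e, hs.1, hs.2]
      have c0 : ∀ m : ℕ, ∑ i ∈ range m, 6 * (lam i:ℚ) = 6 * m^2 := by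
        intro m
        induction m with
        | zero => simp
        | succ m ih => rw [sum_range_succ, ih]; simp only [lam]; push_cast; ring
      simp only [c0]
      have c1 : ∀ m : ℕ, ∑ i ∈ range m, (6 * (lam i:ℚ) * ((lam i:ℚ) * (lam i - 3)) - 6 * (lam i:ℚ) * (6 * i^2)) = 6 * (-((m:ℚ)^2 * (m^2-1)) - 2 * m^2) := by
        intro m
        induction m with
        | zero => simp
        | succ m ih => rw [sum_range_succ, ih]; simp only [lam]; push_cast; ring
      rw [c1]; ring
    rw [h1, sum_neg_distrib, ← mul_sum]
    have h3 : ∑ i ∈ range n, (lam i:ℚ) * (lam i - 1) * (lam i - 2) * W i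
      = 6 * W 1 + ∑ k ∈ Ico 1 (n-1), (lam (k+1):ℚ) * (lam (k+1) - 1) * (lam (k+1) - 2) * W (k+1) := by
      rw [range_eq_Ico, sum_eq_sum_Ico_succ_bot (by omega), sum_eq_sum_Ico_succ_bot (by omega)]
      rw [sum_Ico_add' (fun k => (lam (k):ℚ) * (lam (k) - 1) * (lam (k) - 2) * W (k)) 1 (n-1) 1]
      rw [show n - 1 + 1 = n by omega]
      simp [lam]; norm_num
    obtain ⟨m, rfl⟩ : ∃ m, n = m + 2 := ⟨n-2, by omega⟩
    have h4 := Wt_one m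
    rw [← hW] at h4
    rw [h4, h2] at h3
    push_cast at h3 ⊢
    linear_combination (TH lam (m+2)) * h3
  · intro i hi j hj hij e
    have h1 : (i : ℚ) ≠ j := by exact_mod_cast hij
    simp only [lam] at e
    push_cast at e
    have : ((i:ℚ) - j) * (2 * (i + j) - 1) = 0 := by linear_combination e / 2
    rcases mul_eq_zero.1 this with h | h
    · exact h1 (by linarith)
    · have : (2 * (i + j) : ℚ) = 1 := by linarith
      have : 2 * (i + j) = 1 := by exact_mod_cast this
      omega

end YB

end

section
open Finset

namespace YB
open PowerSeries CliffordAlgebra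

abbrev V := PowerSeries ℚ

noncomputable def theta (N : ℕ) : LinearMap.BilinForm ℚ V :=
  LinearMap.mk₂ ℚ (fun f g => (∑ i ∈ range (2*N), 2 * (-1)^i * (coeff i f * coeff (4*N-i) g)) +
      coeff (2*N) f * coeff (2*N) g)
    (by intro f f' g; simp only [map_add, add_mul, mul_add, sum_add_distrib]; ring)
    (by intro c f g; simp only [map_smul, smul_eq_mul, mul_add, mul_sum]; congr 1
        · exact sum_congr rfl fun i _ => by ring
        · ring)
    (by intro f g g'; simp only [map_add, mul_add, sum_add_distrib]; ring)
    (by intro c f g; simp only [map_smul, smul_eq_mul, mul_add, mul_sum]; congr 1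
        · exact sum_congr rfl fun i _ => by ring
        · ring)

lemma theta_apply (N : ℕ) (f g : V) : theta N f g = 
   (∑ i ∈ range (2*N), 2 * (-1)^i * (coeff i f * coeff (4*N-i) g)) +
      coeff (2*N) f * coeff (2*N) g := rfl

noncomputable def QF (N : ℕ) : QuadraticForm ℚ V := (theta N).toQuadraticMap

lemma QF_apply (N : ℕ) (f : V) : QF N f = theta N f f := rfl

lemma QF_eq (N : ℕ) (f : V) : QF N f = coeff (4*N) (f * rescale (-1) f) := by
  rw [QF_apply, theta_apply, coeff_mul, Nat.sum_antidiagonal_eq_sum_range_succ_mk]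
  simp only [coeff_rescale]
  rw [show (4*N).succ = 2*N + 1 + 2*N by omega, sum_range_add, sum_range_succ _ (2*N)]
  rw [← sum_range_reflect (fun x => coeff (2*N+1+x) f * _) (2*N),
    add_right_comm (∑ i ∈ range _, _), ← sum_add_distrib]
  congr 1
  · refine sum_congr rfl fun i hi => ?_
    have hi := mem_range.1 hi
    rw [show 2*N+1+(2*N-1-i) = 4*N-i by omega, show 4*N-(4*N-i) = i by omega]
    have : (-1:ℚ)^(4*N-i) = (-1)^i := by
      rw [neg_one_pow_eq_pow_mod_two, neg_one_pow_eq_pow_mod_two (n := i)]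
      congr 1; omega
    rw [this]; ring
  · rw [show 4*N-2*N = 2*N by omega, pow_mul]; simp

abbrev Cl (N : ℕ) := CliffordAlgebra (QF N)

lemma Epf (N : ℕ) : (-theta N).toQuadraticMap = 0 - QF N := by
  ext f; simp [QF_apply]

noncomputable def E0 (N : ℕ) : Cl N →ₗ[ℚ] ℚ :=
  (ExteriorAlgebra.algebraMapInv (R := ℚ) (M := V)).toLinearMap ∘ₗ changeForm (Epf N)

lemma E0_one (N : ℕ) : E0 N 1 = 1 := by
  simp [E0]

lemma E0_ι_mul (N : ℕ) (u : V) (x : Cl N) :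
    E0 N (ι (QF N) u * x) = E0 N (contractLeft (theta N u) x) := by
  have h : ∀ y : ExteriorAlgebra ℚ V, ExteriorAlgebra.algebraMapInv (ι (0 : QuadraticForm ℚ V) u * y) = 0 := by
    intro y
    rw [map_mul, show ExteriorAlgebra.algebraMapInv (ι (0 : QuadraticForm ℚ V) u) = 0 from ?_, zero_mul]
    exact ExteriorAlgebra.lift_ι_apply ..
  simp only [E0, LinearMap.comp_apply, changeForm_ι_mul, AlgHom.toLinearMap_apply, map_sub]
  rw [h, zero_sub, ← changeForm_contractLeft]
  simp


lemma polar_eq (N : ℕ) (f g : V) : QuadraticMap.polar (QF N) f g =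
    coeff (4*N) (f * rescale (-1) g + g * rescale (-1) f) := by
  rw [QuadraticMap.polar, QF_eq, QF_eq, QF_eq, ← map_sub, ← map_sub, map_add]
  congr 1; ring

lemma polar_X (N : ℕ) (f : V) : QuadraticMap.polar (QF N) f (X * f) = 0 := by
  rw [polar_eq, map_mul]
  have : rescale (-1) (X : V) = -X := by
    ext k; rw [coeff_rescale, coeff_X, map_neg, coeff_X]
    split_ifs with h <;> simp [h]
  rw [this]
  ring_nf; simp

/-- multiplication by `X` -/
noncomputable def mX : V →ₗ[ℚ] V := LinearMap.mulLeft ℚ X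

noncomputable def dualLift (N : ℕ) : Cl N →ₐ[ℚ] TrivSqZeroExt (Cl N) (Cl N) :=
  CliffordAlgebra.lift (QF N) ⟨(TrivSqZeroExt.inlAlgHom ℚ (Cl N) (Cl N)).toLinearMap ∘ₗ ι (QF N)
    + (TrivSqZeroExt.inrHom (Cl N) (Cl N)).restrictScalars ℚ ∘ₗ ι (QF N) ∘ₗ mX, by
    intro f
    ext
    · simp [TrivSqZeroExt.algebraMap_eq_inl']
    · have := polar_X N f
      have h2 := ι_mul_ι_add_swap (Q := QF N) f (X * f)
      rw [this] at h2
      simpa [TrivSqZeroExt.algebraMap_eq_inl', mX] using h2⟩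

lemma dualLift_ι (N : ℕ) (f : V) : dualLift N (ι (QF N) f) = 
    TrivSqZeroExt.inl (ι (QF N) f) + TrivSqZeroExt.inr (ι (QF N) (X * f)) := by
  simp [dualLift, mX]

lemma dualLift_fst (N : ℕ) (x : Cl N) : (dualLift N x).fst = x := by
  have : (TrivSqZeroExt.fstHom ℚ (Cl N) (Cl N)).comp (dualLift N) = AlgHom.id ℚ _ := by
    ext f; simp [dualLift_ι]
  exact DFunLike.congr_fun this x

noncomputable def HH (N : ℕ) : Cl N →ₗ[ℚ] Cl N where
  toFun x := (dualLift N x).snd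
  map_add' x y := by simp
  map_smul' c x := by simp

lemma HH_ι (N : ℕ) (f : V) : HH N (ι (QF N) f) = ι (QF N) (X * f) := by
  simp [HH, dualLift_ι]

lemma HH_mul (N : ℕ) (x y : Cl N) : HH N (x * y) = HH N x * y + x * HH N y := by
  simp [HH, dualLift_fst, add_comm]

lemma HH_one (N : ℕ) : HH N 1 = 0 := by simp [HH]

/-- the modes -/
noncomputable def ph (N m : ℕ) : Cl N := ι (QF N) (X ^ (2*N - m))

noncomputable def E1 (N : ℕ) : Cl N →ₗ[ℚ] ℚ := E0 N + E0 N ∘ₗ LinearMap.mulLeft ℚ (ph N 0)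

lemma E1_apply (N : ℕ) (x : Cl N) : E1 N x = E0 N x + E0 N (ph N 0 * x) := rfl

lemma theta_zero_of_dvd (N : ℕ) {b c : ℕ} {u v : V} (hu : X ^ b ∣ u) (hv : X ^ c ∣ v)
    (h : 4 * N < b + c) : theta N u v = 0 := by
  rw [X_pow_dvd_iff] at hu hv
  rw [theta_apply]
  have : ∀ i j, i + j = 4*N → coeff i u * coeff j v = 0 := by
    intro i j hij
    by_cases hi : i < b
    · rw [hu i hi, zero_mul]
    · rw [hv j (by omega), mul_zero]
  rw [this _ _ (by omega), add_zero]
  refine sum_eq_zero fun i hi => ?_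
  have hi' := mem_range.1 hi
  rw [this _ _ (by omega), mul_zero]

lemma theta_zero_left (N : ℕ) {u : V} (hu : X ^ (2*N+1) ∣ u) : theta N u = 0 := by
  rw [X_pow_dvd_iff] at hu
  ext v
  rw [theta_apply, hu _ (by omega), zero_mul, add_zero]
  refine sum_eq_zero fun i hi => ?_
  have := mem_range.1 hi
  rw [hu _ (by omega), zero_mul, mul_zero]

lemma E0_kill (N : ℕ) {u : V} (hu : X ^ (2*N+1) ∣ u) (x : Cl N) : E0 N (ι (QF N) u * x) = 0 := by
  rw [E0_ι_mul, theta_zero_left N hu]; simp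

lemma ι_sq_ph (N m : ℕ) (hm : m ≤ 2 * N) : ph N m * ph N m = if m = 0 then 1 else 0 := by
  rw [ph, ι_sq_scalar, QF_eq, map_pow]
  have : rescale (-1) (X : V) = -X := by
    ext k; rw [coeff_rescale, coeff_X, map_neg, coeff_X]
    split_ifs with h <;> simp [h]
  rw [this, neg_pow, mul_left_comm, ← pow_add, show (-1 : V) = C (-1) by simp, ← map_pow, coeff_C_mul, coeff_X_pow]
  split_ifs with h1 h2 h2
  · subst h2; simp
  · omega
  · omega
  · simp

lemma E1_kill (N : ℕ) {u : V} (hu : X ^ (2*N+1) ∣ u) (x : Cl N) : E1 N (ι (QF N) u * x) = 0 := by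
  rw [E1_apply, E0_kill N hu, ← mul_assoc, ph]
  have h2 := ι_mul_ι_add_swap (Q := QF N) (X ^ (2*N - 0)) u
  rw [eq_sub_of_add_eq h2, sub_mul, map_sub, mul_assoc, E0_kill N hu]
  have : QuadraticMap.polar (QF N) (X ^ (2*N - 0)) u = 0 := by
    rw [QuadraticMap.polar, QF_apply, QF_apply, QF_apply]
    simp only [map_add, LinearMap.add_apply, theta_zero_left N hu]
    rw [theta_zero_of_dvd N (dvd_refl _) hu (by omega)]; simp
  rw [this]; simp

lemma E1_ph (N : ℕ) (x : Cl N) : E1 N (ph N 0 * x) = E1 N x := by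
  rw [E1_apply, E1_apply, ← mul_assoc, ι_sq_ph N 0 (by omega)]; simp [add_comm]

lemma E1_one (N : ℕ) : E1 N 1 = 1 := by
  rw [E1_apply, E0_one, ph, E0_ι_mul]; simp

noncomputable def Lam (N : ℕ) : ℕ → (Cl N →ₗ[ℚ] ℚ)
  | 0 => E1 N
  | m+1 => Lam N m ∘ₗ HH N

lemma Lam_succ (N m : ℕ) (x : Cl N) : Lam N (m+1) x = Lam N m (HH N x) := rfl

lemma Lam_kill (N m : ℕ) {u : V} (hu : X ^ (2*N+1) ∣ u) (x : Cl N) : Lam N m (ι (QF N) u * x) = 0 := by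
  induction m generalizing u x with
  | zero => exact E1_kill N hu x
  | succ m ih => rw [Lam_succ, HH_mul, map_add, HH_ι, ih hu, ih (hu.mul_left _), add_zero]

lemma Lam_ph (N m : ℕ) (x : Cl N) : Lam N m (ph N 0 * x) = Lam N m x := by
  induction m generalizing x with
  | zero => exact E1_ph N x
  | succ m ih =>
    rw [Lam_succ, HH_mul, map_add, ih, Lam_succ, ph, HH_ι, Lam_kill, zero_add]
    rw [pow_succ']; simp

end YB

end

section
open Finset

namespace YB
open PowerSeries CliffordAlgebra

/-- product of a list of vectors with recorded orders -/
noncomputable def lp (N : ℕ) (l : List (V × ℕ)) : Cl N := (l.map fun p => ι (QF N) p.1).prod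
def good (l : List (V × ℕ)) : Prop := ∀ p ∈ l, (X : V) ^ p.2 ∣ p.1
def deg (N : ℕ) (l : List (V × ℕ)) : ℤ := (l.map fun p => (2*N : ℤ) - p.2).sum

lemma lp_cons (N : ℕ) (p) (l : List (V × ℕ)) : lp N (p :: l) = ι (QF N) p.1 * lp N l := by simp [lp]
lemma deg_cons (N : ℕ) (p) (l : List (V × ℕ)) : deg N (p :: l) = (2*N : ℤ) - p.2 + deg N l := by
  simp [deg]
lemma good_cons (p) (l : List (V × ℕ)) : good (p :: l) ↔ (X : V) ^ p.2 ∣ p.1 ∧ good l := by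
  simp [good]

lemma contract_aux (N : ℕ) {u : V} {b : ℕ} (hu : X ^ b ∣ u) (l : List (V × ℕ)) (hl : good l)
    (T : Cl N →ₗ[ℚ] ℚ) (hT : ∀ l', good l' → l'.length < l.length →
      deg N l' ≤ deg N l + 2 * N - b → T (lp N l') = 0) :
    T (contractLeft (theta N u) (lp N l)) = 0 := by
  induction l generalizing T with
  | nil => simp [lp]
  | cons p l ih =>
    rw [good_cons] at hl
    rw [lp_cons, contractLeft_ι_mul, map_sub, map_smul]
    have h1 : theta N u p.1 • T (lp N l) = 0 := by
      by_cases h : 4 * N < b + p.2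
      · rw [theta_zero_of_dvd N hu hl.1 h, zero_smul]
      · rw [hT l hl.2 (by simp) (by rw [deg_cons]; omega), smul_zero]
    rw [h1, zero_sub, neg_eq_zero]
    refine ih hl.2 (T ∘ₗ LinearMap.mulLeft ℚ (ι (QF N) p.1)) fun l' h1 h2 h3 => ?_
    simp only [LinearMap.comp_apply, LinearMap.mulLeft_apply, ← lp_cons]
    exact hT _ ((good_cons _ _).2 ⟨hl.1, h1⟩) (by simpa using h2) (by rw [deg_cons, deg_cons]; omega)

lemma E0_deg (N : ℕ) (r : ℕ) : ∀ l : List (V × ℕ), l.length ≤ r → good l → deg N l < 0 → E0 N (lp N l) = 0 := by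
  induction r with
  | zero =>
    intro l h1 h2 h3
    have : l = [] := by simpa using h1
    subst this; simp [deg] at h3
  | succ r ih =>
    intro l h1 h2 h3
    cases l with
    | nil => simp [deg] at h3
    | cons p l =>
      rw [lp_cons, E0_ι_mul]
      rw [good_cons] at h2
      rw [deg_cons] at h3
      refine contract_aux N h2.1 l h2.2 _ fun l' h4 h5 h6 => ih l' ?_ h4 ?_
      · simp at h1; omega
      · omega

lemma HH_aux (N : ℕ) (l : List (V × ℕ)) (hl : good l)
    (T : Cl N →ₗ[ℚ] ℚ) (hT : ∀ l', good l' → 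
      deg N l' ≤ deg N l - 1 → T (lp N l') = 0) :
    T (HH N (lp N l)) = 0 := by
  induction l generalizing T with
  | nil => simp [lp, HH_one]
  | cons p l ih =>
    rw [good_cons] at hl
    rw [lp_cons, HH_mul, map_add, HH_ι]
    have := hT ((X * p.1, p.2+1) :: l) ((good_cons _ _).2 ⟨?_, hl.2⟩) ?_
    · rw [lp_cons] at this; rw [this, zero_add]
      refine ih hl.2 (T ∘ₗ LinearMap.mulLeft ℚ (ι (QF N) p.1)) fun l' h1 h3 => ?_
      simp only [LinearMap.comp_apply, LinearMap.mulLeft_apply, ← lp_cons]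
      exact hT _ ((good_cons _ _).2 ⟨hl.1, h1⟩) (by rw [deg_cons, deg_cons]; omega)
    · rw [pow_succ']; exact mul_dvd_mul_left _ hl.1
    · rw [deg_cons, deg_cons]; push_cast; omega

lemma Lam_deg (N : ℕ) (m : ℕ) (l : List (V × ℕ)) (hl : good l) (h : deg N l < m) :
    Lam N m (lp N l) = 0 := by
  induction m generalizing l with
  | zero =>
    have h1 := E0_deg N _ l le_rfl hl (by simpa using h)
    have h2 := E0_deg N _ ((X^(2*N-0), 2*N) :: l) le_rfl ((good_cons _ _).2 ⟨by simp, hl⟩)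
      (by rw [deg_cons]; push_cast at h ⊢; omega)
    rw [lp_cons] at h2
    change E1 N _ = 0
    rw [E1_apply, h1, zero_add]; exact h2
  | succ m ih =>
    rw [Lam_succ]
    refine HH_aux N l hl _ fun l' h1 h2 => ih l' h1 (by push_cast at h; omega)

lemma lead_aux (N : ℕ) (l : List (V × ℕ)) (hl : ∀ p ∈ l, (X : V) ^ (p.2 + 1) ∣ p.1 - X ^ p.2)
    (T : Cl N →ₗ[ℚ] ℚ) (hT : ∀ l', good l' → deg N l' < deg N l → T (lp N l') = 0) :
    T (lp N l) = T (lp N (l.map fun p => (X ^ p.2, p.2))) := by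
  have hg : good l := by
    intro p hp
    have h1 := (pow_dvd_pow (X : V) (Nat.le_succ p.2)).trans (hl p hp)
    exact (dvd_sub_left (dvd_refl _)).1 h1
  induction l generalizing T with
  | nil => rfl
  | cons p l ih =>
    have hp := hl p (by simp)
    rw [good_cons] at hg
    rw [List.map_cons, lp_cons, lp_cons]
    have e : ι (QF N) p.1 = ι (QF N) (p.1 - X ^ p.2) + ι (QF N) (X ^ p.2) := by
      rw [← map_add]; simp
    rw [e, add_mul, map_add]
    have := hT ((p.1 - X ^ p.2, p.2+1) :: l) ((good_cons _ _).2 ⟨hp, hg.2⟩)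
      (by rw [deg_cons, deg_cons]; push_cast; omega)
    rw [lp_cons] at this
    rw [this, zero_add]
    refine ih (fun p hp => hl p (by simp [hp])) (T ∘ₗ LinearMap.mulLeft ℚ (ι (QF N) (X ^ p.2))) (fun l' h1 h3 => ?_) hg.2
    simp only [LinearMap.comp_apply, LinearMap.mulLeft_apply]
    have := hT ((X ^ p.2, p.2) :: l') ((good_cons _ _).2 ⟨by simp, h1⟩) (by rw [deg_cons, deg_cons]; omega)
    rwa [lp_cons] at this

/-- ordered product -/
noncomputable def pr {N : ℕ} (f : ℕ → Cl N) (n : ℕ) : Cl N := ((List.range n).map f).prod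

lemma pr_zero {N : ℕ} (f : ℕ → Cl N) : pr f 0 = 1 := by simp [pr]
lemma pr_succ {N : ℕ} (f : ℕ → Cl N) (n : ℕ) : pr f (n+1) = pr f n * f n := by
  simp [pr, List.range_succ]
lemma pr_succ' {N : ℕ} (f : ℕ → Cl N) (n : ℕ) : pr f (n+1) = f 0 * pr (fun i => f (i+1)) n := by
  simp [pr, List.range_succ_eq_map, Function.comp_def]
lemma pr_congr {N : ℕ} {f g : ℕ → Cl N} {n : ℕ} (h : ∀ i < n, f i = g i) : pr f n = pr g n := by
  unfold pr; congr 1; exact List.map_congr_left (by simpa using h)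

lemma pr_add {N : ℕ} (f : ℕ → Cl N) (n k : ℕ) : pr f (n+k) = pr f n * pr (fun i => f (n+i)) k := by
  simp [pr, List.range_add, Function.comp_def]

lemma pr_split {N : ℕ} (f : ℕ → Cl N) (n k : ℕ) (x : Cl N) (hk : k < n) :
    pr (Function.update f k x) n = pr f k * x * pr (fun i => f (k+1+i)) (n-(k+1)) := by
  obtain ⟨m, rfl⟩ : ∃ m, n = k+1+m := ⟨n-(k+1), by omega⟩
  rw [pr_add, pr_succ, Function.update_self]
  rw [pr_congr (f := Function.update f k x) (g := f) (fun i hi => Function.update_of_ne (by omega) _ _)]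
  rw [show k + 1 + m - (k + 1) = m by omega]
  congr 1
  exact pr_congr (fun i hi => Function.update_of_ne (by omega) _ _)

lemma pr_adj {N : ℕ} (f : ℕ → Cl N) (n k : ℕ) (hk : k + 1 < n) (h : f k * f (k+1) = 0) : pr f n = 0 := by
  obtain ⟨m, rfl⟩ : ∃ m, n = (k+2)+m := ⟨n-(k+2), by omega⟩
  rw [pr_add, pr_succ, pr_succ, mul_assoc (pr f k), h]; simp

lemma HH_pr {N : ℕ} (f : ℕ → Cl N) (n : ℕ) : HH N (pr f n) =
    ∑ i ∈ range n, pr (Function.update f i (HH N (f i))) n := by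
  induction n with
  | zero => simp [pr_zero, HH_one]
  | succ n ih =>
    rw [pr_succ, HH_mul, ih, sum_range_succ, pr_succ, Function.update_self, sum_mul]
    congr 1
    · refine sum_congr rfl fun i hi => ?_
      have := mem_range.1 hi
      rw [pr_succ, Function.update_of_ne (by omega)]
    · rw [pr_congr (f := Function.update f n _) (g := f) (fun i hi => Function.update_of_ne (by omega) _ _)]

lemma TH_eq_zero (a : ℕ → ℕ) (n i j : ℕ) (hij : j < i) (hi : i < n) (h : a i = a j) : TH a n = 0 := by
  induction n with
  | zero => omega
  | succ n ih =>
    simp only [TH]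
    rcases Nat.lt_succ_iff_lt_or_eq.1 hi with h1 | h1
    · rw [ih h1, zero_mul]
    · subst h1
      rw [prod_eq_zero (mem_range.2 hij) (by rw [h, sub_self, zero_div])]; simp

lemma TH_lead (a : ℕ → ℕ) (n : ℕ) (h0 : a 0 = 0) (h : ∀ i, 0 < i → i < n + 1 → 0 < a i) :
    TH a (n+1) = TH (fun i => a (i+1)) n := by
  induction n with
  | zero => simp [TH, h0]
  | succ n ih =>
    rw [TH, ih (fun i h1 h2 => h i h1 (by omega)), TH, prod_range_succ', h0]
    have : (a (n+1) : ℚ) ≠ 0 := by have := h (n+1) (by omega) (by omega); positivity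
    simp [this]

lemma HH_ph (N m : ℕ) (hm : 0 < m) (hm2 : m ≤ 2 * N) : HH N (ph N m) = ph N (m-1) := by
  rw [ph, HH_ι, ← pow_succ', ph]; congr 2; omega

lemma ph_monomial (N : ℕ) (s : ℕ) : ∀ (r : ℕ) (a : ℕ → ℕ), (∀ i < r, 0 < a i) → (∀ i < r, a i ≤ 2 * N) →
    (∀ i < r, ∀ j < i, a j < a i) → ∑ i ∈ range r, a i = s →
    Lam N s (pr (fun i => ph N (a i)) r) = s.factorial * TH a r := by
  induction s with
  | zero =>
    intro r a h1 h2 h3 h4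
    cases r with
    | zero => rw [pr_zero]; simp [TH]; exact E1_one N
    | succ r => rw [sum_range_succ'] at h4; have := h1 0 (by omega); omega
  | succ s ih =>
    intro r a h1 h2 h3 h4
    rw [Lam_succ, HH_pr, map_sum]
    have key : ∀ i ∈ range r, Lam N s (pr (Function.update (fun i => ph N (a i)) i (HH N (ph N (a i)))) r)
       = s.factorial * TH (Function.update a i (a i - 1)) r := by
      intro i hi
      have hi := mem_range.1 hi
      rw [HH_ph N _ (h1 i hi) (h2 i hi)]
      set b := Function.update a i (a i - 1) with hb
      have e : Function.update (fun i => ph N (a i)) i (ph N (a i - 1)) = fun i => ph N (b i) := by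
        ext j; by_cases hj : j = i
        · subst hj; simp [hb]
        · simp [hb, hj]
      rw [e]
      have hbi : b i = a i - 1 := by simp [hb]
      have hbn : ∀ j, j ≠ i → b j = a j := fun j hj => Function.update_of_ne hj _ _
      have hbs : ∑ i ∈ range r, b i = s := by
        have := sum_update_of_mem (mem_range.2 hi) a (a i - 1)
        rw [hb, this]
        have h5 := add_sum_erase (range r) a (mem_range.2 hi)
        rw [erase_eq] at h5
        have := h1 i hi
        omega
      have hb2 : ∀ i < r, b i ≤ 2 * N := by
        intro j hj
        by_cases h : j = i
        · subst h; have := h2 j hj; omega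
        · rw [hbn j h]; exact h2 j hj
      by_cases c1 : 0 < i ∧ a (i-1) = a i - 1
      · rw [TH_eq_zero b r i (i-1) (by omega) hi (by rw [hbi, hbn _ (by omega), c1.2]), mul_zero]
        rw [pr_adj _ r (i-1) (by omega), map_zero]
        rw [show i - 1 + 1 = i by omega, hbn (i-1) (by omega), hbi, ← c1.2, ι_sq_ph, if_neg]
        · have := h1 (i-1) (by omega); omega
        · exact h2 _ (by omega)
      · by_cases c2 : i = 0 ∧ a i = 1
        · obtain ⟨rfl, c2⟩ := c2
          have hb0 : b 0 = 0 := by rw [hbi, c2]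
          obtain ⟨q, rfl⟩ : ∃ q, r = q + 1 := ⟨r - 1, by omega⟩
          rw [pr_succ', hb0, Lam_ph, TH_lead b q hb0]
          · refine ih q (fun i => b (i+1)) (fun i hi => ?_) (fun i hi => hb2 _ (by omega)) (fun i hi j hj => ?_) ?_
            · rw [hbn _ (by omega)]; exact h1 _ (by omega)
            · rw [hbn _ (by omega), hbn _ (by omega)]; exact h3 _ (by omega) _ (by omega)
            · rw [sum_range_succ'] at hbs; omega
          · intro i hi h; rw [hbn _ (by omega)]; exact h1 _ (by omega)
        · refine ih r b (fun j hj => ?_) hb2 (fun j hj k hk => ?_) hbs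
          · by_cases h : j = i
            · subst h
              have := h1 j hj
              by_cases h0 : j = 0
              · have : ¬ a j = 1 := fun h => c2 ⟨h0, h⟩
                omega
              · have := h3 j hj (j-1) (by omega)
                have := h1 (j-1) (by omega)
                omega
            · rw [hbn j h]; exact h1 j hj
          · have h5 := h3 j hj k hk
            by_cases h : j = i
            · subst h
              rw [hbn k (by omega), hbi]
              have h6 : a (j-1) ≠ a j - 1 := fun h => c1 ⟨by omega, h⟩
              have h7 := h3 j hj (j-1) (by omega)
              by_cases h8 : k = j - 1
              · subst h8; omega
              · have := h3 (j-1) (by omega) k (by omega); omega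
            · rw [hbn j h]
              by_cases h' : k = i
              · subst h'; omega
              · rw [hbn k h']; exact h5
    rw [sum_congr rfl key, ← mul_sum, thrall a r h1 h3, ← Nat.cast_sum, h4, Nat.factorial_succ]
    push_cast; ring

lemma monomial (N : ℕ) (r : ℕ) (a : ℕ → ℕ) (h1 : ∀ i < r, 0 < a i) (h2 : ∀ i < r, a i ≤ 2 * N)
    (h3 : ∀ i < r, ∀ j < i, a j < a i) (g : ℕ → V) (hg : ∀ i < r, X ∣ g i - 1) :
    Lam N (∑ i ∈ range r, a i) (pr (fun i => ι (QF N) (X ^ (2*N - a i) * g i)) r)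
      = (∑ i ∈ range r, a i).factorial * TH a r := by
  rw [← ph_monomial N _ r a h1 h2 h3 rfl]
  have := lead_aux N ((List.range r).map fun i => (X ^ (2*N - a i) * g i, 2 * N - a i)) ?_
    (Lam N (∑ i ∈ range r, a i)) ?_
  · simpa [lp, Function.comp_def, pr, ph] using this
  · intro p hp
    obtain ⟨i, hi, rfl⟩ := List.mem_map.1 hp
    have := hg i (by simpa using hi)
    simp only
    rw [pow_succ, ← mul_sub_one]
    exact mul_dvd_mul_left _ this
  · intro l' h4 h5
    refine Lam_deg N _ l' h4 (h5.trans_le ?_)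
    apply le_of_eq
    have : ∀ r, (∀ i < r, a i ≤ 2 * N) → deg N ((List.range r).map fun i => (X ^ (2*N - a i) * g i, 2 * N - a i)) = ∑ i ∈ range r, (a i : ℤ) := by
      intro r
      induction r with
      | zero => intro _; simp [deg]
      | succ r ih =>
        intro h
        rw [sum_range_succ, ← ih (fun i hi => h i (by omega)), List.range_succ]
        have := h r (by omega)
        simp [deg]; omega
    rw [this r h2]; push_cast; rfl

end YB

end

section
open Finset

namespace YB

/-- odd permutations of the integers -/
def SG : Subgroup (Equiv.Perm ℤ) where
  carrier := {w | ∀ x, w (-x) = - w x}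
  mul_mem' := by intro a b ha hb x; simp [hb x, ha (b x)]
  one_mem' := by intro x; simp
  inv_mem' := by
    intro a ha x
    rw [Equiv.Perm.inv_eq_iff_eq, ha]; simp

lemma odd (w : SG) (x : ℤ) : w.1 (-x) = - w.1 x := w.2 x

lemma sB_zero (x : ℤ) : sB 0 x = if x = 1 then -1 else if x = -1 then 1 else x := by
  simp [sB, Equiv.swap_apply_def]

lemma sB_pos (k : ℕ) (hk : 0 < k) (x : ℤ) : sB k x = if x = (k:ℤ) then (k:ℤ)+1 else if x = (k:ℤ)+1 then (k:ℤ)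
   else if x = -(k:ℤ) then -((k:ℤ)+1) else if x = -((k:ℤ)+1) then -(k:ℤ) else x := by
  simp only [sB, if_neg hk.ne', Equiv.Perm.mul_apply, Equiv.swap_apply_def]
  split_ifs <;> omega

def sG (i : ℕ) : SG := ⟨sB i, by
  intro x
  rcases Nat.eq_zero_or_pos i with rfl | h
  · simp only [sB_zero]; split_ifs <;> omega
  · simp only [sB_pos i h]; split_ifs <;> omega⟩

lemma sG_sq (i : ℕ) : sG i * sG i = 1 := by
  ext x
  change sB i (sB i x) = x
  rcases Nat.eq_zero_or_pos i with rfl | h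
  · by_cases h1 : x = 1
    · subst h1; simp [sB_zero]
    by_cases h2 : x = -1
    · subst h2; simp [sB_zero]
    simp [sB_zero, h1, h2]
  · rw [sB_pos i h x]; split_ifs <;> rw [sB_pos i h] <;> split_ifs <;> omega

lemma sG_inv (i : ℕ) : (sG i)⁻¹ = sG i := inv_eq_of_mul_eq_one_left (sG_sq i)

lemma mul_s (w : SG) (i : ℕ) (x : ℤ) : (w * sG i).1 x = w.1 (sB i x) := rfl

lemma sG_ext {v w : SG} (h : ∀ x : ℤ, 0 ≤ x → v.1 x = w.1 x) : v = w := by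
  ext x
  rcases le_total 0 x with hx | hx
  · exact h x hx
  · have := h (-x) (by omega)
    rw [odd, odd] at this; omega

lemma sG_comm (i j : ℕ) (h : i + 1 < j) : sG i * sG j = sG j * sG i := by
  refine sG_ext fun x hx => ?_
  change sB i (sB j x) = sB j (sB i x)
  have hj : 0 < j := by omega
  rcases Nat.eq_zero_or_pos i with rfl | hi
  · rw [sB_pos j hj x, sB_zero x]; split_ifs <;> first | omega | simp (disch := omega) only [sB_zero, sB_pos, if_neg, if_pos]
  · rw [sB_pos j hj x, sB_pos i hi x]; split_ifs <;> first | omega | simp (disch := omega) only [sB_pos, if_neg, if_pos]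

lemma sG_braid (k : ℕ) (hk : 0 < k) : sG k * sG (k+1) * sG k = sG (k+1) * sG k * sG (k+1) := by
  refine sG_ext fun x hx => ?_
  change sB k (sB (k+1) (sB k x)) = sB (k+1) (sB k (sB (k+1) x))
  have s1 : sB k k = k+1 := by simp [sB_pos k hk]
  have s2 : sB k (k+1) = k := by simp [sB_pos k hk]
  have s3 : sB k (k+1+1) = k+1+1 := by rw [sB_pos k hk]; split_ifs <;> omega
  have t1 : sB (k+1) k = k := by rw [sB_pos (k+1) (by omega)]; split_ifs <;> omega
  have t2 : sB (k+1) (k+1) = k+1+1 := by rw [sB_pos (k+1) (by omega)]; split_ifs <;> omega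
  have t3 : sB (k+1) (k+1+1) = k+1 := by rw [sB_pos (k+1) (by omega)]; split_ifs <;> omega
  by_cases h1 : x = k
  · subst h1; simp only [s1, s2, s3, t1, t2, t3]
  by_cases h2 : x = k + 1
  · subst h2; simp only [s1, s2, s3, t1, t2, t3]
  by_cases h3 : x = k + 1 + 1
  · subst h3; simp only [s1, s2, s3, t1, t2, t3]
  have u1 : sB k x = x := by rw [sB_pos k hk]; split_ifs <;> omega
  have u2 : sB (k+1) x = x := by rw [sB_pos (k+1) (by omega)]; split_ifs <;> omega
  simp only [u1, u2]

lemma sG_braid0 : sG 0 * sG 1 * sG 0 * sG 1 = sG 1 * sG 0 * sG 1 * sG 0 := by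
  refine sG_ext fun x hx => ?_
  change sB 0 (sB 1 (sB 0 (sB 1 x))) = sB 1 (sB 0 (sB 1 (sB 0 x)))
  by_cases h1 : x = 1
  · subst h1; simp [sB_zero, sB_pos]
  by_cases h2 : x = 2
  · subst h2; simp [sB_zero, sB_pos]
  have u1 : sB 0 x = x := by rw [sB_zero]; split_ifs <;> omega
  have u2 : sB 1 x = x := by rw [sB_pos 1 one_pos]; split_ifs <;> omega
  simp only [u1, u2]

/-- root values -/
def al (i : ℕ) (w : SG) : ℤ := if i = 0 then 2 * w.1 1 else w.1 (i+1) - w.1 i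

lemma inj (w : SG) {x y : ℤ} : w.1 x = w.1 y ↔ x = y := w.1.injective.eq_iff

lemma al_ne (i : ℕ) (w : SG) : al i w ≠ 0 := by
  unfold al
  split_ifs with h
  · have h1 := odd w 1
    have h2 := inj w (x := -1) (y := 1)
    intro h; omega
  · rw [sub_ne_zero, Ne, inj]; omega

lemma al_s (i : ℕ) (w : SG) : al i (w * sG i) = - al i w := by
  unfold al
  split_ifs with h
  · subst h; rw [mul_s, sB_zero, if_pos rfl, odd]; ring
  · rw [mul_s, mul_s, sB_pos i (by omega), sB_pos i (by omega), if_pos rfl, if_neg (by omega), if_pos rfl]; ring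

noncomputable def dd (i : ℕ) : Module.End ℚ (SG → ℚ) where
  toFun f w := (f w - f (w * sG i)) / al i w
  map_add' f g := by ext w; simp; ring
  map_smul' c f := by ext w; simp; ring

lemma dd_apply (i : ℕ) (f : SG → ℚ) (w : SG) : dd i f w = (f w - f (w * sG i)) / al i w := rfl

lemma dd_sq (i : ℕ) : dd i * dd i = 0 := by
  ext f w
  have h := al_ne i w
  simp only [Module.End.mul_apply, dd_apply, mul_assoc, sG_sq, mul_one, al_s]
  have : (al i w : ℚ) ≠ 0 := by exact_mod_cast h
  push_cast
  simp only [LinearMap.zero_apply, Pi.zero_apply]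
  field_simp
  ring

lemma dd_comm (i j : ℕ) (h : i + 1 < j) : dd i * dd j = dd j * dd i := by
  ext f w
  have h1 : al i (w * sG j) = al i w := by
    unfold al
    split_ifs with h0
    · rw [mul_s, sB_pos j (by omega), if_neg, if_neg, if_neg, if_neg] <;> omega
    · rw [mul_s, mul_s, sB_pos j (by omega), sB_pos j (by omega), if_neg, if_neg, if_neg, if_neg,
        if_neg, if_neg, if_neg, if_neg] <;> omega
  have h2 : al j (w * sG i) = al j w := by
    unfold al
    rw [if_neg (by omega), if_neg (by omega)]
    rcases Nat.eq_zero_or_pos i with rfl | hi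
    · rw [mul_s, mul_s, sB_zero, sB_zero, if_neg, if_neg, if_neg, if_neg] <;> omega
    · rw [mul_s, mul_s, sB_pos i hi, sB_pos i hi, if_neg, if_neg, if_neg, if_neg,
        if_neg, if_neg, if_neg, if_neg] <;> omega
  simp only [Module.End.mul_apply, dd_apply, mul_assoc, h1, h2, sG_comm i j h]
  field_simp
  ring

lemma dd_braid (k : ℕ) (hk : 0 < k) : dd k * dd (k+1) * dd k = dd (k+1) * dd k * dd (k+1) := by
  ext f w
  have e : w * (sG k * (sG (k+1) * sG k)) = w * (sG (k+1) * (sG k * sG (k+1))) := by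
    rw [← mul_assoc (sG k), sG_braid k hk, mul_assoc]
  have s1 : sB k k = k+1 := by simp [sB_pos k hk]
  have s2 : sB k (k+1) = k := by simp [sB_pos k hk]
  have s3 : sB k (k+1+1) = k+1+1 := by rw [sB_pos k hk]; split_ifs <;> omega
  have t1 : sB (k+1) k = k := by rw [sB_pos (k+1) (by omega)]; split_ifs <;> omega
  have t2 : sB (k+1) (k+1) = k+1+1 := by rw [sB_pos (k+1) (by omega)]; split_ifs <;> omega
  have t3 : sB (k+1) (k+1+1) = k+1 := by rw [sB_pos (k+1) (by omega)]; split_ifs <;> omega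
  have n1 : (w.1 (k+1) : ℚ) - w.1 k ≠ 0 := by
    rw [sub_ne_zero]; norm_cast; rw [inj]; omega
  have n2 : (w.1 (k+1+1) : ℚ) - w.1 k ≠ 0 := by
    rw [sub_ne_zero]; norm_cast; rw [inj]; omega
  have n3 : (w.1 (k+1+1) : ℚ) - w.1 (k+1) ≠ 0 := by
    rw [sub_ne_zero]; norm_cast; rw [inj]; omega
  have q : ∀ v : SG, ∀ i, v * sG i * sG i = v := fun v i => by rw [mul_assoc, sG_sq, mul_one]
  simp only [mul_assoc, Module.End.mul_apply, dd_apply]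
  simp only [← mul_assoc, q] at e ⊢
  simp only [e, al, if_neg hk.ne', if_neg (Nat.succ_ne_zero k), mul_s]
  push_cast
  simp only [s1, s2, s3, t1, t2, t3]
  generalize (w.1 (k+1+1) : ℚ) = c at *
  generalize (w.1 (k+1) : ℚ) = b at *
  generalize (w.1 k : ℚ) = a at *
  have n1' : a - b ≠ 0 := by rw [← neg_sub, neg_ne_zero]; exact n1
  have n2' : a - c ≠ 0 := by rw [← neg_sub, neg_ne_zero]; exact n2
  have n3' : b - c ≠ 0 := by rw [← neg_sub, neg_ne_zero]; exact n3
  have m1 : a - b = -(b-a) := by ring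
  rw [m1]; rw [show b - c = -(c-b) by ring]
  field_simp
  ring

lemma dd_braid0 : dd 0 * dd 1 * dd 0 * dd 1 = dd 1 * dd 0 * dd 1 * dd 0 := by
  ext f w
  have e : w * sG 0 * sG 1 * sG 0 * sG 1 = w * sG 1 * sG 0 * sG 1 * sG 0 := by
    have := congrArg (w * ·) sG_braid0
    simpa [mul_assoc] using this
  have s1 : sB 0 1 = -1 := by simp [sB_zero]
  have s2 : sB 0 2 = 2 := by simp [sB_zero]
  have s3 : sB 0 (-1) = 1 := by simp [sB_zero]
  have s4 : sB 0 (-2) = -2 := by simp [sB_zero]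
  have t1 : sB 1 1 = 2 := by simp [sB_pos]
  have t2 : sB 1 2 = 1 := by simp [sB_pos]
  have t3 : sB 1 (-1) = -2 := by simp [sB_pos]
  have t4 : sB 1 (-2) = -1 := by simp [sB_pos]
  have n1 : (w.1 2 : ℚ) - w.1 1 ≠ 0 := by
    rw [sub_ne_zero]; norm_cast; rw [inj]; omega
  have n2 : (w.1 2 : ℚ) + w.1 1 ≠ 0 := by
    rw [← sub_neg_eq_add, ← Int.cast_neg, ← odd, sub_ne_zero]; norm_cast; rw [inj]; omega
  have n3 : (w.1 1 : ℚ) ≠ 0 := by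
    have := al_ne 0 w; simp [al] at this; exact_mod_cast this
  have n4 : (w.1 2 : ℚ) ≠ 0 := by
    have := al_ne 0 (w * sG 1); simp [al, mul_s, t1] at this; exact_mod_cast this
  have q : ∀ v : SG, ∀ i, v * sG i * sG i = v := fun v i => by rw [mul_assoc, sG_sq, mul_one]
  simp only [mul_assoc, Module.End.mul_apply, dd_apply]
  simp only [← mul_assoc, q] at e ⊢
  simp only [e, al, if_true, if_neg one_ne_zero, mul_s]
  push_cast
  norm_num only [s1, s2, s3, s4, t1, t2, t3, t4, odd w 1, odd w 2]
  push_cast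
  generalize (w.1 2 : ℚ) = b at *
  generalize (w.1 1 : ℚ) = a at *
  rw [show -a - b = -(b+a) by ring, show a - -b = b + a by ring, show -a - -b = b - a by ring,
    show b - -a = b + a by ring, show a - b = -(b - a) by ring]
  generalize hd : b - a = d at *
  generalize he : b + a = e at *
  have : a ≠ 0 := n3
  have n5 : e - d ≠ 0 := by rw [← he, ← hd]; ring_nf; simpa using n3
  have n6 : e + d ≠ 0 := by rw [← he, ← hd]; ring_nf; simpa using n4
  obtain rfl : a = (e-d)/2 := by linarith
  obtain rfl : b = (e+d)/2 := by linarith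
  field_simp
  ring

end YB

end

section
open Finset

namespace YB

def gg (a b : ℤ) : ℕ := (if b < a then 1 else 0) + (if a + b < 0 then 1 else 0)
def PP (n : ℕ) : Finset (ℕ × ℕ) := (range n ×ˢ range n).filter (fun p => p.1 < p.2)
def ell (n : ℕ) (w : SG) : ℕ := ∑ p ∈ PP n, gg (w.1 (p.1+1)) (w.1 (p.2+1)) +
  ∑ i ∈ range n, if w.1 (i+1) < 0 then 1 else 0

lemma mem_PP {n : ℕ} {p : ℕ × ℕ} : p ∈ PP n ↔ p.1 < p.2 ∧ p.2 < n := by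
  simp [PP]; omega

lemma card_PP (n : ℕ) : 2 * (PP n).card + n = n ^ 2 := by
  induction n with
  | zero => simp [PP]
  | succ n ih =>
    have : PP (n+1) = PP n ∪ (range n).image (fun i => (i, n)) := by
      ext ⟨a, b⟩; simp [mem_PP]; omega
    rw [this, card_union_of_disjoint, card_image_of_injective, card_range]
    · nlinarith
    · intro a b h; simpa using h
    · rw [disjoint_left]; rintro ⟨a, b⟩ h; rw [mem_PP] at h; simp; omega

lemma ell_up (n i : ℕ) (hi : i < n) (w : SG) (h : 0 < al i w) : ell n (w * sG i) = ell n w + 1 := by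
  unfold ell
  rcases Nat.eq_zero_or_pos i with rfl | h0
  · simp only [al, if_true] at h
    have e1 : ∑ p ∈ PP n, gg ((w * sG 0).1 (p.1+1)) ((w * sG 0).1 (p.2+1)) =
        ∑ p ∈ PP n, gg (w.1 (p.1+1)) (w.1 (p.2+1)) := by
      refine sum_congr rfl fun p hp => ?_
      rw [mem_PP] at hp
      rw [mul_s, mul_s, sB_zero, sB_zero, if_neg (by omega : ¬ (p.2 + 1 : ℤ) = 1), if_neg (by omega : ¬ (p.2 + 1 : ℤ) = -1)]
      by_cases h1 : p.1 = 0
      · rw [h1]; simp only [Nat.cast_zero, zero_add, if_true, odd]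
        unfold gg; split_ifs <;> omega
      · rw [if_neg (by omega), if_neg (by omega)]
    obtain ⟨m, rfl⟩ : ∃ m, n = m + 1 := ⟨n-1, by omega⟩
    rw [e1, sum_range_succ', sum_range_succ', add_assoc, add_assoc]
    have e2 : ∀ k : ℕ, (w * sG 0).1 ((k+1 : ℕ) + 1) = w.1 ((k + 1 : ℕ) + 1) := by
      intro k; rw [mul_s, sB_zero, if_neg (by omega), if_neg (by omega)]
    simp only [e2]
    simp only [mul_s, sB_zero, Nat.cast_zero, zero_add, if_true, odd]
    rw [if_pos (by omega), if_neg (by omega)]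
  · simp only [al, if_neg h0.ne'] at h
    set σ : Equiv.Perm ℕ := Equiv.swap (i-1) i with hσ
    have hσa : ∀ x, σ x = if x = i-1 then i else if x = i then i-1 else x := fun x => Equiv.swap_apply_def _ _ _
    have hs : ∀ k : ℕ, (w * sG i).1 (k+1) = w.1 (σ k + 1) := by
      intro k
      rw [mul_s, sB_pos i h0, hσa]
      congr 1
      split_ifs <;> omega
    simp only [hs]
    have e1 : ∑ k ∈ range n, (if w.1 (σ k + 1) < 0 then 1 else 0) = ∑ k ∈ range n, if w.1 (k + 1) < 0 then 1 else 0 := by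
      refine sum_equiv σ (fun k => ?_) (fun k _ => rfl)
      rw [mem_range, mem_range, hσa]; split_ifs <;> omega
    rw [e1]
    have hm : (i-1, i) ∈ PP n := by rw [mem_PP]; simp; omega
    rw [← add_sum_erase _ _ hm, ← add_sum_erase _ (fun p : ℕ × ℕ => gg (w.1 (p.1+1)) (w.1 (p.2+1))) hm]
    have e2 : ∑ p ∈ (PP n).erase (i-1, i), gg (w.1 (σ p.1+1)) (w.1 (σ p.2+1)) =
       ∑ p ∈ (PP n).erase (i-1, i), gg (w.1 (p.1+1)) (w.1 (p.2+1)) := by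
      have hmem : ∀ p ∈ (PP n).erase (i-1, i), (σ p.1, σ p.2) ∈ (PP n).erase (i-1, i) := by
        rintro ⟨a, b⟩ hp
        rw [mem_erase, mem_PP, Ne, Prod.mk.injEq] at hp ⊢
        simp only [hσa]
        simp only at hp
        split_ifs <;> omega
      have hinv : ∀ x, σ (σ x) = x := fun x => by simp [hσ]
      refine sum_nbij' (fun p => (σ p.1, σ p.2)) (fun p => (σ p.1, σ p.2)) hmem hmem ?_ ?_ ?_
      · intro p _; simp [hinv]
      · intro p _; simp [hinv]
      · intro p _; rfl
    rw [e2]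
    have s1 : σ (i-1) = i := by simp [hσ]
    have s2 : σ i = i-1 := by simp [hσ]
    simp only [s1, s2]
    have : gg (w.1 (i+1)) (w.1 ((i-1 : ℕ) + 1)) = gg (w.1 ((i-1 : ℕ) + 1)) (w.1 (i+1)) + 1 := by
      rw [show (((i-1 : ℕ) : ℤ) + 1) = i by omega]
      unfold gg; split_ifs <;> omega
    rw [this]; ring

lemma ell_down (n i : ℕ) (hi : i < n) (w : SG) (h : al i w < 0) : ell n (w * sG i) + 1 = ell n w := by
  have := ell_up n i hi (w * sG i) (by rw [al_s]; omega)
  rw [← this, mul_assoc, sG_sq, mul_one]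

def supp (n : ℕ) (w : SG) : Prop := ∀ x : ℤ, n < x → w.1 x = x

lemma supp_mul {n : ℕ} {v w : SG} (hv : supp n v) (hw : supp n w) : supp n (v * w) := by
  intro x hx
  change v.1 (w.1 x) = x
  rw [hw x hx, hv x hx]

lemma supp_inv {n : ℕ} {w : SG} (hw : supp n w) : supp n w⁻¹ := by
  intro x hx
  change w.1⁻¹ x = x
  rw [Equiv.Perm.inv_eq_iff_eq, hw x hx]

lemma supp_s {n i : ℕ} (hi : i < n) : supp n (sG i) := by
  intro x hx
  change sB i x = x
  rcases Nat.eq_zero_or_pos i with rfl | h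
  · rw [sB_zero]; split_ifs <;> omega
  · rw [sB_pos i h]; split_ifs <;> omega

lemma supp_one (n : ℕ) : supp n 1 := fun _ _ => rfl

lemma no_desc (n : ℕ) (w : SG) (hw : supp n w) (h : ∀ i < n, 0 < al i w) : w = 1 := by
  have hlow : ∀ k : ℕ, k < n → (k + 1 : ℤ) ≤ w.1 (k + 1) := by
    intro k
    induction k with
    | zero => intro h0; have := h 0 h0; simp [al] at this ⊢; omega
    | succ k ih =>
      intro hk
      have h1 := ih (by omega)
      have h2 := h (k+1) hk
      simp only [al, if_neg (Nat.succ_ne_zero k)] at h2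
      push_cast at h2 ⊢; omega
  have hup : ∀ k : ℕ, k < n → w.1 (n - k) ≤ n - k := by
    intro k
    induction k with
    | zero =>
      intro h0
      by_contra hc
      push Not at hc
      have h1 := hw (w.1 n) (by simpa using hc)
      rw [inj] at h1
      simp at hc; omega
    | succ k ih =>
      intro hk
      have h1 := ih (by omega)
      have h2 := h (n-(k+1)) (by omega)
      rw [al, if_neg (by omega)] at h2
      rw [show ((n - (k+1) : ℕ) : ℤ) = n - (k+1) by omega] at h2
      rw [show (n - (k+1) + 1 : ℤ) = n - k by omega] at h2
      push_cast; omega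
  refine sG_ext fun x hx => ?_
  change w.1 x = x
  rcases lt_or_ge (n : ℤ) x with h1 | h1
  · exact hw x h1
  rcases hx.lt_or_eq with h2 | h2
  · have a1 := hlow (x.toNat - 1) (by omega)
    have a2 := hup (n - x.toNat) (by omega)
    rw [show (((x.toNat - 1 : ℕ) : ℤ) + 1) = x by omega] at a1
    rw [show ((n : ℤ) - (n - x.toNat : ℕ)) = x by omega] at a2
    omega
  · subst h2; have := odd w 0; simp at this; omega

def LL (n : ℕ) (w : SG) : ℕ := ell n w⁻¹

lemma LL_s (n i : ℕ) (w : SG) : LL n (sG i * w) = ell n (w⁻¹ * sG i) := by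
  rw [LL, mul_inv_rev, sG_inv]

lemma LL_down {n i : ℕ} (hi : i < n) {w : SG} (h : al i w⁻¹ < 0) : LL n (sG i * w) + 1 = LL n w := by
  rw [LL_s, ell_down n i hi _ h, LL]

lemma LL_up {n i : ℕ} (hi : i < n) {w : SG} (h : ¬ al i w⁻¹ < 0) : LL n (sG i * w) = LL n w + 1 := by
  have := al_ne i w⁻¹
  rw [LL_s, ell_up n i hi _ (by omega), LL]

lemma LL_le {n i : ℕ} (hi : i < n) (w : SG) : LL n (sG i * w) ≤ LL n w + 1 := by
  by_cases h : al i w⁻¹ < 0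
  · have := LL_down hi h; omega
  · rw [LL_up hi h]

lemma ell_one (n : ℕ) : ell n 1 = 0 := by
  unfold ell
  have h1 : ∑ p ∈ PP n, gg ((1 : SG).1 (p.1+1)) ((1 : SG).1 (p.2+1)) = 0 := by
    refine sum_eq_zero fun p hp => ?_
    rw [mem_PP] at hp
    change gg ((p.1 : ℤ) + 1) ((p.2 : ℤ) + 1) = 0
    unfold gg; rw [if_neg (by omega), if_neg (by omega)]
  have h2 : (∑ i ∈ range n, if (1 : SG).1 (i+1) < 0 then 1 else 0) = 0 := by
    refine sum_eq_zero fun i hi => ?_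
    change (if ((i : ℤ) + 1) < 0 then 1 else 0) = 0
    rw [if_neg (by omega)]
  rw [h1, h2]

def wp (l : List ℕ) : SG := (l.map sG).prod
noncomputable def op (l : List ℕ) : Module.End ℚ (SG → ℚ) := (l.map dd).prod

lemma wp_cons (i : ℕ) (l : List ℕ) : wp (i :: l) = sG i * wp l := by simp [wp]
lemma op_cons (i : ℕ) (l : List ℕ) : op (i :: l) = dd i * op l := by simp [op]
lemma ss (i : ℕ) (w : SG) : sG i * (sG i * w) = w := by rw [← mul_assoc, sG_sq, one_mul]

def lt (n : ℕ) (l : List ℕ) : Prop := ∀ i ∈ l, i < n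
lemma lt_cons {n i : ℕ} {l : List ℕ} : lt n (i :: l) ↔ i < n ∧ lt n l := by simp [lt]

lemma supp_wp {n : ℕ} {l : List ℕ} (h : lt n l) : supp n (wp l) := by
  induction l with
  | nil => exact supp_one n
  | cons i l ih => rw [lt_cons] at h; rw [wp_cons]; exact supp_mul (supp_s h.1) (ih h.2)

lemma LL_wp {n : ℕ} {l : List ℕ} (h : lt n l) : LL n (wp l) ≤ l.length := by
  induction l with
  | nil => simp [wp, LL, ell_one]
  | cons i l ih =>
    rw [lt_cons] at h; rw [wp_cons, List.length_cons]
    exact (LL_le h.1 _).trans (by have := ih h.2; omega)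

lemma exists_word (n : ℕ) (m : ℕ) : ∀ w, supp n w → LL n w = m → ∃ l, lt n l ∧ wp l = w ∧ l.length = m := by
  induction m with
  | zero =>
    intro w hw h
    refine ⟨[], by simp [lt], ?_, rfl⟩
    have : w⁻¹ = 1 := by
      refine no_desc n _ (supp_inv hw) fun i hi => ?_
      by_contra hc
      have := al_ne i w⁻¹
      have := LL_down hi (show al i w⁻¹ < 0 by omega)
      omega
    rw [inv_eq_one] at this
    rw [this]; rfl
  | succ m ih =>
    intro w hw h
    by_cases hd : ∃ i < n, al i w⁻¹ < 0
    · obtain ⟨i, hi, hd⟩ := hd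
      obtain ⟨l, h1, h2, h3⟩ := ih (sG i * w) (supp_mul (supp_s hi) hw) (by have := LL_down hi hd; omega)
      exact ⟨i :: l, lt_cons.2 ⟨hi, h1⟩, by rw [wp_cons, h2, ss], by simp [h3]⟩
    · push Not at hd
      have : w⁻¹ = 1 := no_desc n _ (supp_inv hw) fun i hi => by
        have := hd i hi
        have := al_ne i w⁻¹
        omega
      rw [LL, this, ell_one] at h; omega

lemma inv_s (i : ℕ) (w : SG) : (sG i * w)⁻¹ = w⁻¹ * sG i := by rw [mul_inv_rev, sG_inv]

lemma braid_word {n i j : ℕ} (hij : i < j) (hj : j < n) (w : SG) (hw : supp n w)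
    (di : al i w⁻¹ < 0) (dj : al j w⁻¹ < 0) :
    ∃ u v, lt n u ∧ lt n v ∧ wp (i :: u) = w ∧ wp (j :: v) = w ∧ u.length + 1 = LL n w ∧
      v.length + 1 = LL n w ∧ op (i :: u) = op (j :: v) := by
  have hi : i < n := by omega
  have si := supp_s hi
  have sj := supp_s hj
  have L1 := LL_down hi di
  by_cases c : i + 1 < j
  · have d2 : al j (sG i * w)⁻¹ < 0 := by
      rw [inv_s]
      convert dj using 1
      unfold al
      rw [if_neg (by omega), if_neg (by omega)]
      rcases Nat.eq_zero_or_pos i with rfl | hi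
      · rw [mul_s, mul_s, sB_zero, sB_zero, if_neg, if_neg, if_neg, if_neg] <;> omega
      · rw [mul_s, mul_s, sB_pos i hi, sB_pos i hi, if_neg, if_neg, if_neg, if_neg,
          if_neg, if_neg, if_neg, if_neg] <;> omega
    have L2 := LL_down hj d2
    obtain ⟨l, h1, h2, h3⟩ := exists_word n _ (sG j * (sG i * w)) (supp_mul sj (supp_mul si hw)) rfl
    refine ⟨j :: l, i :: l, lt_cons.2 ⟨hj, h1⟩, lt_cons.2 ⟨hi, h1⟩, ?_, ?_, ?_, ?_, ?_⟩
    · rw [wp_cons, wp_cons, h2, ss, ss]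
    · rw [wp_cons, wp_cons, h2, ← mul_assoc (sG j), ← sG_comm i j c, mul_assoc, ss, ss]
    · rw [List.length_cons]; omega
    · rw [List.length_cons]; omega
    · simp only [op_cons]; rw [← mul_assoc, dd_comm i j c, mul_assoc]
  · obtain rfl : j = i + 1 := by omega
    rcases Nat.eq_zero_or_pos i with rfl | hi0
    · have t : sB 1 1 = 2 ∧ sB 1 2 = 1 ∧ sB 1 (-1) = -2 ∧ sB 1 (-2) = -1 := by
        simp [sB_pos]
      have t' : sB 0 1 = -1 ∧ sB 0 2 = 2 ∧ sB 0 (-1) = 1 ∧ sB 0 (-2) = -2 := by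
        simp [sB_zero]
      obtain ⟨t1, t2, t3, t4⟩ := t
      obtain ⟨s1, s2, s3, s4⟩ := t'
      have o1 := odd w⁻¹ 1
      have o2 := odd w⁻¹ 2
      have a0 : ∀ y : SG, al 0 y = 2 * y.1 1 := fun y => rfl
      have a1 : ∀ y : SG, al 1 y = y.1 2 - y.1 1 := fun y => rfl
      simp only [zero_add] at dj hj sj
      rw [a0] at di
      rw [a1] at dj
      have L2 := LL_down (i := 1) hj (w := sG 0 * w) (by
        rw [a1, inv_s]; simp only [mul_s, s1, s2, o1]; omega)
      have L3 := LL_down (i := 0) hi (w := sG 1 * (sG 0 * w)) (by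
        rw [a0, inv_s, inv_s]; simp only [mul_s, s1, s2, t1, t2, o1, o2]; omega)
      have L4 := LL_down (i := 1) hj (w := sG 0 * (sG 1 * (sG 0 * w))) (by
        rw [a1, inv_s, inv_s, inv_s]; simp only [mul_s, s1, s2, s3, s4, t1, t2, t3, t4, o1, o2]; omega)
      obtain ⟨l, h1, h2, h3⟩ := exists_word n _ (sG 1 * (sG 0 * (sG 1 * (sG 0 * w))))
        (supp_mul sj (supp_mul si (supp_mul sj (supp_mul si hw)))) rfl
      refine ⟨1 :: 0 :: 1 :: l, 0 :: 1 :: 0 :: l, by simp [lt_cons, *], by simp [lt_cons, *], ?_, ?_, ?_, ?_, ?_⟩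
      · simp only [wp_cons, h2, ss]
      · simp only [wp_cons, h2]
        have := congrArg (· * (sG 1 * (sG 0 * (sG 1 * (sG 0 * w))))) sG_braid0
        simp only [mul_assoc, ss] at this
        simpa using this.symm
      · simp only [List.length_cons]; omega
      · simp only [List.length_cons]; omega
      · simp only [op_cons]
        have := congrArg (· * op l) dd_braid0
        simpa only [mul_assoc] using this
    · have s1 : sB i i = i+1 := by simp [sB_pos i hi0]
      have s2 : sB i (i+1) = i := by simp [sB_pos i hi0]
      have s3 : sB i (i+1+1) = i+1+1 := by rw [sB_pos i hi0]; split_ifs <;> omega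
      have t1 : sB (i+1) i = i := by rw [sB_pos (i+1) (by omega)]; split_ifs <;> omega
      have t2 : sB (i+1) (i+1) = i+1+1 := by rw [sB_pos (i+1) (by omega)]; split_ifs <;> omega
      have t3 : sB (i+1) (i+1+1) = i+1 := by rw [sB_pos (i+1) (by omega)]; split_ifs <;> omega
      simp only [al, if_neg hi0.ne', if_neg (Nat.succ_ne_zero i)] at di dj
      simp only [Nat.cast_add, Nat.cast_one] at di dj
      have L2 := LL_down hj (w := sG i * w) (by
        rw [al, if_neg (by omega), inv_s]; simp only [Nat.cast_add, Nat.cast_one, mul_s, s2, s3]; omega)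
      have L3 := LL_down hi (w := sG (i+1) * (sG i * w)) (by
        rw [al, if_neg (by omega), inv_s, inv_s]; simp only [mul_s, s1, s2, s3, t1, t2, t3]; omega)
      obtain ⟨l, h1, h2, h3⟩ := exists_word n _ (sG i * (sG (i+1) * (sG i * w)))
        (supp_mul si (supp_mul sj (supp_mul si hw))) rfl
      refine ⟨(i+1) :: i :: l, i :: (i+1) :: l, by simp [lt_cons, *], by simp [lt_cons, *], ?_, ?_, ?_, ?_, ?_⟩
      · simp only [wp_cons, h2, ss]
      · simp only [wp_cons, h2]
        have := congrArg (· * (sG i * (sG (i+1) * (sG i * w)))) (sG_braid i hi0)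
        simp only [mul_assoc, ss] at this
        simpa using this.symm
      · simp only [List.length_cons]; omega
      · simp only [List.length_cons]; omega
      · simp only [op_cons]
        have := congrArg (· * op l) (dd_braid i hi0)
        simpa only [mul_assoc] using this

lemma claimA (n m : ℕ) : ∀ a b, lt n a → lt n b → a.length = m → b.length = m → wp a = wp b →
    LL n (wp a) = m → op a = op b := by
  induction m with
  | zero =>
    intro a b _ _ h1 h2 _ _
    rw [List.length_eq_zero_iff] at h1 h2; rw [h1, h2]
  | succ m ih =>
    have same : ∀ i u v, lt n (i :: u) → lt n (i :: v) → u.length = m → v.length = m → wp (i :: u) = wp (i :: v) →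
        LL n (wp (i :: u)) = m + 1 → op (i :: u) = op (i :: v) := by
      intro i u v h1 h2 h3 h4 h5 h6
      rw [lt_cons] at h1 h2
      rw [op_cons, op_cons, ih u v h1.2 h2.2 h3 h4]
      · simpa [wp_cons] using h5
      · have := LL_le h1.1 (wp u)
        rw [wp_cons] at h6
        have := LL_wp h1.2
        omega
    have main : ∀ i j u v, i < j → lt n (i :: u) → lt n (j :: v) → u.length = m → v.length = m →
        wp (i :: u) = wp (j :: v) → LL n (wp (i :: u)) = m + 1 → op (i :: u) = op (j :: v) := by
      intro i j u v hij h1 h2 h3 h4 h5 h6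
      have g1 := lt_cons.1 h1
      have g2 := lt_cons.1 h2
      have di : al i (wp (i :: u))⁻¹ < 0 := by
        by_contra hc
        have := LL_up g1.1 hc
        rw [wp_cons, ss, ← wp_cons, h6] at this
        have := LL_wp g1.2
        omega
      have dj : al j (wp (i :: u))⁻¹ < 0 := by
        by_contra hc
        have := LL_up g2.1 hc
        rw [h6, h5, wp_cons, ss] at this
        have := LL_wp g2.2
        omega
      obtain ⟨u', v', k1, k2, k3, k4, k5, k6, k7⟩ := braid_word hij g2.1 _ (supp_wp h1) di dj
      rw [same i u u' h1 (lt_cons.2 ⟨g1.1, k1⟩) h3 (by omega) k3.symm h6, k7]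
      exact same j v' v (lt_cons.2 ⟨g2.1, k2⟩) h2 (by omega) h4 (by rw [k4, h5]) (by rw [k4, h6])
    intro a b h1 h2 h3 h4 h5 h6
    obtain ⟨i, u, rfl⟩ := List.exists_cons_of_length_eq_add_one h3
    obtain ⟨j, v, rfl⟩ := List.exists_cons_of_length_eq_add_one h4
    simp only [List.length_cons, Nat.add_right_cancel_iff] at h3 h4
    rcases lt_trichotomy i j with h | h | h
    · exact main i j u v h h1 h2 h3 h4 h5 h6
    · subst h; exact same i u v h1 h2 h3 h4 h5 h6
    · exact (main j i v u h h2 h1 h4 h3 h5.symm (h5 ▸ h6)).symm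

lemma claimB (n : ℕ) (a : List ℕ) (ha : lt n a) (h : LL n (wp a) < a.length) : op a = 0 := by
  induction a with
  | nil => simp at h
  | cons i u ih =>
    have g := lt_cons.1 ha
    rw [op_cons]
    by_cases c : LL n (wp u) < u.length
    · rw [ih g.2 c, mul_zero]
    · have h2 := LL_wp g.2
      rw [wp_cons, List.length_cons] at h
      have d : al i (wp u)⁻¹ < 0 := by
        by_contra hc
        have := LL_up g.1 hc
        omega
      have L := LL_down g.1 d
      obtain ⟨l, h3, h4, h5⟩ := exists_word n _ (sG i * wp u) (supp_mul (supp_s g.1) (supp_wp g.2)) rfl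
      rw [claimA n u.length u (i :: l) g.2 (lt_cons.2 ⟨g.1, h3⟩) rfl (by rw [List.length_cons]; omega)
        (by rw [wp_cons, h4, ss]) (by omega), op_cons, ← mul_assoc, dd_sq, zero_mul]

def W0 (n : ℕ) : SG := ⟨w0B n, by
  intro x
  change w0BFun n (-x) = - w0BFun n x
  unfold w0BFun; split_ifs <;> omega⟩

lemma W0_apply (n : ℕ) (x : ℤ) : (W0 n).1 x = if -(n : ℤ) ≤ x ∧ x ≤ (n : ℤ) then -x else x := rfl

lemma W0_sq (n : ℕ) : W0 n * W0 n = 1 := by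
  ext x
  exact w0BFun_involutive n x

lemma W0_supp (n : ℕ) : supp n (W0 n) := by
  intro x hx; rw [W0_apply, if_neg]; omega

lemma ell_W0 (n : ℕ) (w : SG) : ell n (w * W0 n) + ell n w = n ^ 2 := by
  have hv : ∀ k < n, (w * W0 n).1 (k + 1) = - w.1 (k+1) := by
    intro k hk
    change w.1 ((W0 n).1 (k+1)) = _
    rw [W0_apply, if_pos (by omega), odd]
  have h1 : ∑ p ∈ PP n, gg ((w * W0 n).1 (p.1+1)) ((w * W0 n).1 (p.2+1)) +
     ∑ p ∈ PP n, gg (w.1 (p.1+1)) (w.1 (p.2+1)) = 2 * (PP n).card := by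
    rw [← sum_add_distrib]
    refine (sum_congr rfl (g := fun _ => 2) fun p hp => ?_).trans (by simp [mul_comm])
    rw [mem_PP] at hp
    rw [hv _ (by omega), hv _ (by omega)]
    have n1 : w.1 (p.1+1) ≠ w.1 (p.2+1) := by rw [Ne, inj]; omega
    have n2 : w.1 (p.1+1) ≠ - w.1 (p.2+1) := by rw [← odd, Ne, inj]; omega
    unfold gg; split_ifs <;> omega
  have h2 : (∑ i ∈ range n, if (w * W0 n).1 (i+1) < 0 then 1 else 0) +
     (∑ i ∈ range n, if w.1 (i+1) < 0 then 1 else 0) = n := by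
    rw [← sum_add_distrib]
    refine (sum_congr rfl (g := fun _ => 1) fun i hi => ?_).trans (by simp)
    rw [hv _ (mem_range.1 hi)]
    have n2 : w.1 (i+1) ≠ - w.1 (i+1) := by rw [← odd, Ne, inj]; omega
    split_ifs <;> omega
  have := card_PP n
  unfold ell; omega

lemma ell_eq_W0 (n : ℕ) (w : SG) (hw : supp n w) (h : LL n w = n ^ 2) : w = W0 n := by
  have h1 := ell_W0 n w⁻¹
  rw [← LL, h] at h1
  have h2 : w⁻¹ * W0 n = 1 := by
    refine no_desc n _ (supp_mul (supp_inv hw) (W0_supp n)) fun i hi => ?_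
    by_contra hc
    have := al_ne i (w⁻¹ * W0 n)
    have := ell_down n i hi (w⁻¹ * W0 n) (by omega)
    omega
  rwa [inv_mul_eq_one] at h2

lemma LL_W0 (n : ℕ) : LL n (W0 n) = n ^ 2 := by
  have h1 := ell_W0 n 1
  rw [ell_one, one_mul] at h1
  rw [LL, inv_eq_of_mul_eq_one_left (W0_sq n)]; exact h1

lemma op_W0 (n : ℕ) (a b : List ℕ) (ha : lt n a) (hb : lt n b) (h1 : a.length = n^2) (h2 : b.length = n^2)
    (h3 : wp a = W0 n) (h4 : wp b = W0 n) : op a = op b :=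
  claimA n (n^2) a b ha hb h1 h2 (h3.trans h4.symm) (by rw [h3, LL_W0])

lemma op_ne (n : ℕ) (a : List ℕ) (ha : lt n a) (h1 : a.length = n^2) (h3 : wp a ≠ W0 n) : op a = 0 := by
  refine claimB n a ha ?_
  have h2 := LL_wp ha
  have : LL n (wp a) ≠ n ^ 2 := fun h => h3 (ell_eq_W0 n _ (supp_wp ha) h)
  omega

end YB

end

section
open Finset

namespace YB
open PowerSeries CliffordAlgebra

/-- coordinates -/
def xx (w : SG) (j : ℕ) : ℚ := w.1 (j+1)

noncomputable def gA (a : ℚ) : V := 1 - C (a^2) * X^2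
noncomputable def gB (a : ℚ) : V := 1 + C a * X
noncomputable def pA (k : ℕ) (x : ℕ → ℚ) : V := ∏ j ∈ range k, gA (x j)
noncomputable def pB (n k : ℕ) (x : ℕ → ℚ) : V := ∏ j ∈ Ico k n, gB (x j)
noncomputable def pp (n k : ℕ) (x : ℕ → ℚ) : V := pA k x * pB n k x
noncomputable def zz (n : ℕ) (x : ℕ → ℚ) : V := (∏ j ∈ range n, gB |x j|)⁻¹

lemma xx_s (w : SG) (k : ℕ) (hk : 0 < k) (j : ℕ) : xx (w * sG k) j = xx w (Equiv.swap (k-1) k j) := by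
  unfold xx
  rw [mul_s, sB_pos k hk, Equiv.swap_apply_def]
  congr 2
  split_ifs <;> omega

lemma xx_0 (w : SG) (j : ℕ) : xx (w * sG 0) j = if j = 0 then - xx w 0 else xx w j := by
  unfold xx
  rw [mul_s, sB_zero]
  by_cases h : j = 0
  · subst h; simp [odd]
  · rw [if_neg (by omega), if_neg (by omega), if_neg h]

lemma prod_swap (S : Finset ℕ) (k : ℕ) (g : ℕ → V) (h : k-1 ∈ S ↔ k ∈ S) :
    ∏ j ∈ S, g (Equiv.swap (k-1) k j) = ∏ j ∈ S, g j := by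
  refine prod_equiv (Equiv.swap (k-1) k) (fun j => ?_) (fun j _ => rfl)
  rw [Equiv.swap_apply_def]
  split_ifs with h1 h2
  · rw [h1, h]
  · rw [h2, h]
  · rfl

lemma zz_s (n k : ℕ) (hk : k < n) (w : SG) : zz n (xx (w * sG k)) = zz n (xx w) := by
  unfold zz
  congr 1
  rcases Nat.eq_zero_or_pos k with rfl | h
  · refine prod_congr rfl fun j _ => ?_
    rw [xx_0]; split_ifs with h
    · rw [abs_neg, h]
    · rfl
  · simp only [xx_s w k h]
    exact prod_swap _ k (fun j => gB |xx w j|) (by simp; omega)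

lemma pp_s (n k m : ℕ) (hk : k < n) (hm : m ≠ k) (w : SG) : pp n m (xx (w * sG k)) = pp n m (xx w) := by
  unfold pp pA pB
  rcases Nat.eq_zero_or_pos k with rfl | h
  · congr 1
    · refine prod_congr rfl fun j _ => ?_
      rw [xx_0]; split_ifs with h
      · rw [h, gA, gA, neg_sq]
      · rfl
    · refine prod_congr rfl fun j hj => ?_
      rw [mem_Ico] at hj
      rw [xx_0, if_neg (by omega)]
  · simp only [xx_s w k h]
    rw [prod_swap _ k (fun j => gA (xx w j)) (by simp; omega), prod_swap _ k (fun j => gB (xx w j)) (by simp; omega)]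

lemma pp_diff (n k : ℕ) (h0 : 0 < k) (hk : k < n) (w : SG) :
    pp n k (xx w) - pp n k (xx (w * sG k)) = C (al k w : ℚ) * (X * pp n (k-1) (xx w)) := by
  obtain ⟨k, rfl⟩ : ∃ m, k = m + 1 := ⟨k-1, by omega⟩
  have e : (al (k+1) w : ℚ) = xx w (k+1) - xx w k := by
    simp [al, xx]
  have h1 : ∀ j < k, xx (w * sG (k+1)) j = xx w j := by
    intro j hj; rw [xx_s _ _ h0, Equiv.swap_apply_of_ne_of_ne] <;> simp <;> omega
  have h2 : ∀ j ∈ Ico (k+2) n, xx (w * sG (k+1)) j = xx w j := by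
    intro j hj; rw [mem_Ico] at hj; rw [xx_s _ _ h0, Equiv.swap_apply_of_ne_of_ne] <;> simp <;> omega
  have h3 : xx (w * sG (k+1)) k = xx w (k+1) := by rw [xx_s _ _ h0]; simp
  have h4 : xx (w * sG (k+1)) (k+1) = xx w k := by rw [xx_s _ _ h0]; simp
  have q1 : ∏ j ∈ range k, gA (xx (w * sG (k+1)) j) = ∏ j ∈ range k, gA (xx w j) :=
    prod_congr rfl (fun j hj => by rw [h1 j (mem_range.1 hj)])
  have q2 : ∏ j ∈ Ico (k+1+1) n, gB (xx (w * sG (k+1)) j) = ∏ j ∈ Ico (k+1+1) n, gB (xx w j) :=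
    prod_congr rfl (fun j hj => by rw [h2 j hj])
  unfold pp pA pB
  rw [Nat.add_sub_cancel, prod_range_succ, prod_range_succ, prod_eq_prod_Ico_succ_bot hk,
    prod_eq_prod_Ico_succ_bot hk, prod_eq_prod_Ico_succ_bot (show k < n by omega), prod_eq_prod_Ico_succ_bot hk,
    h3, h4, q1, q2, e, gA, gA, gB, gB, map_sub, map_pow, map_pow]
  ring

lemma pp_rel (n k : ℕ) (h0 : 0 < k) (hk : k < n) (x : ℕ → ℚ) :
    pp n (k-1) x = pp n k x + C (x (k-1)) * (X * pp n (k-1) x) := by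
  obtain ⟨k, rfl⟩ : ∃ m, k = m + 1 := ⟨k-1, by omega⟩
  unfold pp pA pB
  rw [Nat.add_sub_cancel, prod_range_succ, prod_eq_prod_Ico_succ_bot (show k < n by omega), gA, gB, map_pow]
  ring

lemma pp_zero_diff (n : ℕ) (hn : 0 < n) (w : SG) :
    pp n 0 (xx w) - pp n 0 (xx (w * sG 0)) = C (al 0 w : ℚ) * (X * pB n 1 (xx w)) := by
  have e : (al 0 w : ℚ) = 2 * xx w 0 := by simp [al, xx]
  unfold pp pA pB
  have h2 : ∀ j ∈ Ico (0+1) n, xx (w * sG 0) j = xx w j := by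
    intro j hj; rw [mem_Ico] at hj; rw [xx_0, if_neg]; omega
  have q2 : ∏ j ∈ Ico (0+1) n, gB (xx (w * sG 0) j) = ∏ j ∈ Ico (0+1) n, gB (xx w j) :=
    prod_congr rfl (fun j hj => by rw [h2 j hj])
  rw [prod_eq_prod_Ico_succ_bot hn, prod_eq_prod_Ico_succ_bot hn, q2,
    xx_0, if_pos rfl, e, gB, gB, map_mul, map_neg, map_ofNat]
  simp only [range_zero, prod_empty, zero_add]
  ring

lemma pp_zero (n : ℕ) (hn : 0 < n) (x : ℕ → ℚ) : pp n 0 x = pB n 1 x + C (x 0) * (X * pB n 1 x) := by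
  unfold pp pA pB
  rw [prod_eq_prod_Ico_succ_bot hn, gB]
  simp only [range_zero, prod_empty, zero_add]
  ring

lemma cc_gB (a : ℚ) : constantCoeff (gB a) = 1 := by simp [gB]
lemma cc_gA (a : ℚ) : constantCoeff (gA a) = 1 := by simp [gA]
lemma cc_Z (n : ℕ) (x : ℕ → ℚ) : constantCoeff (∏ j ∈ range n, gB |x j|) = 1 := by
  rw [map_prod, prod_congr rfl (fun j _ => cc_gB _)]; simp

lemma cc_zp (n k : ℕ) (x : ℕ → ℚ) : X ∣ zz n x * pp n k x - 1 := by
  rw [X_dvd_iff, map_sub, map_mul, zz, constantCoeff_inv, cc_Z, pp, map_mul, pA, pB, map_prod, map_prod,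
    prod_congr rfl (fun j _ => cc_gB _), prod_congr rfl (fun j _ => cc_gA _)]; simp

lemma resc_X : rescale (-1) (X : V) = -X := by
  ext n
  rw [coeff_rescale, map_neg, coeff_X]
  split_ifs with h
  · rw [h]; simp
  · simp

lemma resc_C (a : ℚ) : rescale (-1) (C a : V) = C a := by
  ext n
  rw [coeff_rescale, coeff_C]
  split_ifs with h
  · rw [h]; simp
  · simp

lemma resc_gA (a : ℚ) : rescale (-1) (gA a) = gA a := by
  rw [gA, map_sub, map_mul, map_pow _ X, resc_X, resc_C, map_one, neg_sq]

lemma resc_gB (a : ℚ) : gB a * rescale (-1) (gB a) = gA a := by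
  rw [gB, gA, map_add, map_mul, resc_X, resc_C, map_one, map_pow]; ring

lemma coeff_pA (k : ℕ) (x : ℕ → ℚ) : ∀ d, 2 * k < d → coeff d (pA k x) = 0 := by
  induction k with
  | zero => intro d hd; rw [pA]; simp [coeff_one]; omega
  | succ k ih =>
    intro d hd
    obtain ⟨d, rfl⟩ : ∃ m, d = m + 2 := ⟨d-2, by omega⟩
    have : pA (k+1) x = pA k x - C (x k ^ 2) * (pA k x * X^2) := by
      rw [pA, prod_range_succ, ← pA, gA]; ring
    rw [this, map_sub, coeff_C_mul, coeff_mul_X_pow, ih _ (by omega), ih _ (by omega)]; simp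

lemma zz_resc (n : ℕ) (x : ℕ → ℚ) : zz n x * rescale (-1) (zz n x) * pA n x = 1 := by
  have hZ : (∏ j ∈ range n, gB |x j|) * zz n x = 1 := PowerSeries.mul_inv_cancel _ (by rw [cc_Z]; simp)
  have h2 := congrArg (rescale (-1 : ℚ)) hZ
  rw [map_mul, map_one] at h2
  have h3 : pA n x = (∏ j ∈ range n, gB |x j|) * rescale (-1) (∏ j ∈ range n, gB |x j|) := by
    rw [map_prod, ← prod_mul_distrib, pA]
    refine prod_congr rfl fun j _ => ?_
    rw [resc_gB, gA, gA, sq_abs]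
  rw [h3]
  linear_combination (rescale (-1) (∏ j ∈ range n, gB |x j|) * rescale (-1) (zz n x)) * hZ + h2

lemma pA_split (n k : ℕ) (hk : k ≤ n) (x : ℕ → ℚ) : pA n x = pA k x * (pB n k x * rescale (-1) (pB n k x)) := by
  rw [pB, map_prod, ← prod_mul_distrib, prod_congr rfl (fun j _ => resc_gB _), pA, pA, prod_range_mul_prod_Ico _ hk]

lemma Q_row (n k : ℕ) (hk : k < n) (x : ℕ → ℚ) :
    ι (QF n) (X^(2*n - (2*k+1)) * (zz n x * pp n k x)) * ι (QF n) (X^(2*n - (2*k+1)) * (zz n x * pp n k x)) = 0 := by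
  rw [ι_sq_scalar, QF_eq]
  have hA : rescale (-1) (pA k x) = pA k x := by
    rw [pA, map_prod]; exact prod_congr rfl fun j _ => resc_gA _
  have : X^(2*n - (2*k+1)) * (zz n x * pp n k x) * rescale (-1) (X^(2*n - (2*k+1)) * (zz n x * pp n k x)) =
     C ((-1)^(2*n - (2*k+1))) * (pA k x * X^(2 * (2*n - (2*k+1)))) := by
    have h1 := zz_resc n x
    rw [pA_split n k hk.le] at h1
    rw [map_mul, map_mul, map_pow, resc_X, pp, map_mul, hA, neg_pow, pow_mul' _ 2, map_pow, map_neg, map_one]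
    linear_combination (X ^ (2 * n - (2 * k + 1)) * (-1) ^ (2 * n - (2 * k + 1)) * X ^ (2 * n - (2 * k + 1)) * pA k x) * h1
  rw [this, coeff_C_mul, show 4 * n = (4 * k + 2) + 2 * (2*n - (2*k+1)) by omega, coeff_mul_X_pow,
    coeff_pA _ _ _ (by omega)]
  simp

/-- general row products -/
noncomputable def rows (n : ℕ) (e m : ℕ → ℕ) (w : SG) (j : ℕ) : V :=
  X^(2*n - e j) * (zz n (xx w) * pp n (m j) (xx w))

noncomputable def GG (n : ℕ) (T : Cl n →ₗ[ℚ] ℚ) (e m : ℕ → ℕ) (w : SG) : ℚ :=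
  T (pr (fun j => ι (QF n) (rows n e m w j)) n)

lemma dd_GG_aux (n : ℕ) (T : Cl n →ₗ[ℚ] ℚ) (v : SG → ℕ → V) (k j : ℕ) (hj : j < n) (w : SG) (u : V)
    (h1 : ∀ i < n, i ≠ j → v (w * sG k) i = v w i)
    (h2 : v w j - v (w * sG k) j = C (al k w : ℚ) * u) :
    dd k (fun w => T (pr (fun i => ι (QF n) (v w i)) n)) w =
      T (pr (Function.update (fun i => ι (QF n) (v w i)) j (ι (QF n) u)) n) := by
  have hu : ι (QF n) (v w j) - ι (QF n) (v (w * sG k) j) = (al k w : ℚ) • ι (QF n) u := by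
    rw [← map_sub, h2, ← map_smul, smul_eq_C_mul]
  have e2 : pr (fun i => ι (QF n) (v (w * sG k) i)) n =
      pr (Function.update (fun i => ι (QF n) (v w i)) j (ι (QF n) (v (w * sG k) j))) n := by
    refine pr_congr fun i hi => ?_
    by_cases h : i = j
    · subst h; simp
    · rw [Function.update_of_ne h, h1 i hi h]
  have e1 : pr (fun i => ι (QF n) (v w i)) n =
      pr (Function.update (fun i => ι (QF n) (v w i)) j (ι (QF n) (v w j))) n := by
    rw [Function.update_eq_self j (fun i => ι (QF n) (v w i))]
  rw [dd_apply, div_eq_iff (by exact_mod_cast al_ne k w)]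
  rw [← map_sub, e2, e1, pr_split _ _ _ _ hj, pr_split _ _ _ _ hj, pr_split _ _ _ _ hj, ← sub_mul, ← mul_sub, hu,
    mul_smul_comm, smul_mul_assoc, map_smul, smul_eq_mul, mul_comm]

lemma rows_s (n k : ℕ) (hk : k < n) (e m : ℕ → ℕ) (w : SG) (j : ℕ) (h : m j ≠ k) :
    rows n e m (w * sG k) j = rows n e m w j := by
  rw [rows, rows, zz_s n k hk, pp_s n k _ hk h]

lemma dd_GG0 (n : ℕ) (T : Cl n →ₗ[ℚ] ℚ) (e m : ℕ → ℕ) (k j : ℕ) (hk0 : 0 < k) (hk : k < n) (hj : j < n)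
    (hm : m j = k) (hm2 : ∀ i < n, i ≠ j → m i ≠ k) (h1 : 1 ≤ e j) (h2 : e j ≤ 2 * n) (w : SG) :
    dd k (GG n T e m) w = T (pr (Function.update (fun i => ι (QF n) (rows n e m w i)) j
      (ι (QF n) (X^(2*n - (e j - 1)) * (zz n (xx w) * pp n (k-1) (xx w))))) n) :=
  dd_GG_aux n T (rows n e m) k j hj w (X^(2*n - (e j - 1)) * (zz n (xx w) * pp n (k-1) (xx w)))
    (fun i hi hij => rows_s n k hk e m w i (hm2 i hi hij)) (by
      rw [rows, rows, zz_s n k hk, hm]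
      have h3 := pp_diff n k hk0 hk w
      rw [show 2 * n - (e j - 1) = (2 * n - e j) + 1 by omega, pow_succ]
      linear_combination (X ^ (2*n - e j) * zz n (xx w)) * h3)

lemma dd_GG (n : ℕ) (T : Cl n →ₗ[ℚ] ℚ) (e m : ℕ → ℕ) (k j : ℕ) (hk0 : 0 < k) (hk : k < n) (hj : j < n)
    (hm : m j = k) (hm2 : ∀ i < n, i ≠ j → m i ≠ k) (h1 : 1 ≤ e j) (h2 : e j ≤ 2 * n) :
    dd k (GG n T e m) = GG n T (Function.update e j (e j - 1)) (Function.update m j (k-1)) := by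
  funext w
  rw [dd_GG0 n T e m k j hk0 hk hj hm hm2 h1 h2, GG]
  congr 1
  refine pr_congr fun i hi => ?_
  by_cases h : i = j
  · subst h; simp [rows]
  · rw [Function.update_of_ne h, rows, rows, Function.update_of_ne h, Function.update_of_ne h]

noncomputable def ff (n m : ℕ) : SG → ℚ := GG n (Lam n m) lam id

lemma dd_ff (n m k : ℕ) (hk : k < n) (w : SG) : dd k (ff n m) w =
    Lam n m (pr (Function.update (fun i => ι (QF n) (rows n lam id w i)) k (HH n (ι (QF n) (rows n lam id w k)))) n) := by
  rw [HH_ι]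
  rcases Nat.eq_zero_or_pos k with rfl | h0
  · have hp : (X : V)^(2*n) = X^(2*n - lam 0) * X := by
      rw [← pow_succ]; congr 1; simp [lam]; omega
    have := dd_GG_aux n (Lam n m) (rows n lam id) 0 0 hk w (X^(2*n) * (zz n (xx w) * pB n 1 (xx w)))
      (fun i hi hij => rows_s n 0 hk _ _ w i hij) (by
        rw [rows, rows, zz_s n 0 hk, hp]
        have h3 := pp_zero_diff n hk w
        simp only [id]
        linear_combination (X ^ (2*n - lam 0) * zz n (xx w)) * h3)
    refine Eq.trans this ?_
    rw [pr_split _ _ _ _ hk, pr_split _ _ _ _ hk, pr_zero, one_mul, one_mul, ← sub_eq_zero, ← map_sub, ← sub_mul,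
      ← map_sub]
    refine Lam_kill n m ?_ _
    rw [rows, id, pp_zero n hk, pow_succ, hp]
    refine ⟨- (zz n (xx w) * C (xx w 0) * pB n 1 (xx w)), ?_⟩
    ring
  · have := dd_GG0 n (Lam n m) lam id k k h0 hk hk rfl (fun i _ h => h) (by simp [lam]) (by simp [lam]; omega) w
    refine Eq.trans this ?_
    have hu : X^(2*n - (lam k - 1)) * (zz n (xx w) * pp n (k-1) (xx w)) =
        X * rows n lam id w k + C (xx w (k-1)) * rows n lam id w (k-1) := by
      have h3 := pp_rel n k h0 hk (xx w)
      have p1 : (X : V)^(2*n - (lam k - 1)) = X^(2*n - lam k) * X := by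
        rw [← pow_succ]; congr 1; simp [lam]; omega
      have p2 : (X : V)^(2*n - lam (k-1)) = X^(2*n - lam k) * X * X := by
        rw [← pow_succ, ← pow_succ]; congr 1; simp [lam]; omega
      rw [rows, rows, p1, p2, id, id]
      linear_combination (X^(2*n - lam k) * X * zz n (xx w)) * h3
    have hz : pr (Function.update (fun i => ι (QF n) (rows n lam id w i)) k (ι (QF n) (rows n lam id w (k-1)))) n = 0 := by
      refine pr_adj _ n (k-1) (by omega) ?_
      rw [Nat.sub_add_cancel h0, Function.update_self, Function.update_of_ne (by omega)]
      exact Q_row n (k-1) (by omega) (xx w)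
    rw [pr_split _ _ _ _ hk] at hz ⊢
    rw [pr_split _ _ _ _ hk, hu, map_add, ← smul_eq_C_mul, map_smul, mul_add, add_mul, mul_smul_comm, smul_mul_assoc,
      hz, smul_zero, add_zero]

lemma sum_dd_ff (n m : ℕ) : (∑ k ∈ range n, dd k (ff n m)) = ff n (m+1) := by
  funext w
  have e : ff n (m+1) w = Lam n (m+1) (pr (fun j => ι (QF n) (rows n lam id w j)) n) := rfl
  rw [Finset.sum_apply, e, Lam_succ, HH_pr, map_sum]
  exact sum_congr rfl fun k hk => dd_ff n m k (mem_range.1 hk) w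

lemma sum_lam (n : ℕ) : ∑ i ∈ range n, lam i = n ^ 2 := by
  induction n with
  | zero => simp
  | succ n ih => rw [sum_range_succ, ih, lam]; ring

lemma GG_eval (n s : ℕ) (e m : ℕ → ℕ) (h1 : ∀ i < n, 0 < e i) (h2 : ∀ i < n, e i ≤ 2 * n)
    (h3 : ∀ i < n, ∀ j < i, e j < e i) (hs : ∑ i ∈ range n, e i = s) (w : SG) :
    GG n (Lam n s) e m w = s.factorial * TH e n := by
  subst hs
  exact monomial n n e h1 h2 h3 (fun i => zz n (xx w) * pp n (m i) (xx w)) (fun i _ => cc_zp n _ _)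

lemma ff_top (n : ℕ) (w : SG) : ff n (n^2) w = (n^2).factorial * TH lam n :=
  GG_eval n _ _ _ (fun i _ => by simp [lam]) (fun i _ => by simp [lam]; omega)
    (fun i _ j h => by simp [lam]; omega) (sum_lam n) w

lemma sum_ek (n k : ℕ) (hk : k + 1 < n) : ∑ i ∈ range n, ek k i + 3 = n ^ 2 := by
  rw [← sum_lam]
  have m1 : k ∈ range n := mem_range.2 (by omega)
  have m2 : k + 1 ∈ (range n).erase k := by simp; omega
  rw [← add_sum_erase _ _ m1, ← add_sum_erase _ _ m2, ← add_sum_erase _ lam m1, ← add_sum_erase _ lam m2]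
  have : ∑ i ∈ ((range n).erase k).erase (k+1), ek k i = ∑ i ∈ ((range n).erase k).erase (k+1), lam i := by
    refine sum_congr rfl fun i hi => ?_
    simp only [mem_erase] at hi
    rw [ek, Function.update_of_ne hi.1, Function.update_of_ne hi.2.1]
  rw [this]
  simp [ek, lam, Function.update_apply]; omega

lemma triple (n k : ℕ) (h0 : 0 < k) (hk : k + 1 < n) (w : SG) :
    (dd k * dd (k+1) * dd k) (ff n (n^2 - 3)) w = (n^2 - 3).factorial * TH (ek k) n := by
  have hek : ∀ i, ek k i = if i = k + 1 then 2 * k + 1 else if i = k then 2 * k else 2 * i + 1 := by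
    intro i; simp [ek, Function.update_apply, lam]
  rw [Module.End.mul_apply, Module.End.mul_apply, ff]
  rw [dd_GG n _ _ id k k h0 (by omega) (by omega) rfl (fun i _ h => h) (by simp [lam]) (by simp [lam]; omega)]
  rw [dd_GG n _ _ _ (k+1) (k+1) (by omega) (by omega) (by omega) (by simp)
    (fun i _ h => by simp [Function.update_apply]; split_ifs <;> omega) (by simp [lam]) (by simp [lam]; omega)]
  rw [dd_GG n _ _ _ k (k+1) (by omega) (by omega) (by omega) (by simp)
    (fun i _ h => by simp [Function.update_apply]; split_ifs <;> omega) (by simp [lam]; omega) (by simp [lam]; omega)]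
  have he : (Function.update (Function.update (Function.update lam k (lam k - 1)) (k + 1) (Function.update lam k (lam k - 1) (k + 1) - 1))
      (k + 1) (Function.update (Function.update lam k (lam k - 1)) (k + 1) (Function.update lam k (lam k - 1) (k + 1) - 1) (k + 1) - 1)) = ek k := by
    funext i
    rw [hek]
    simp [Function.update_apply, lam]
    split_ifs <;> omega
  rw [he]
  refine GG_eval n _ _ _ (fun i _ => ?_) (fun i _ => ?_) (fun i _ j h => ?_) (by have := sum_ek n k hk; omega) w
  · rw [hek]; split_ifs <;> omega
  · rw [hek]; split_ifs <;> omega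
  · rw [hek, hek]; split_ifs <;> omega

end YB

end

section
open Finset

namespace YB
open scoped Classical in
noncomputable def Wd (n : ℕ) : ℕ → Finset (List ℕ)
  | 0 => {[]}
  | m+1 => (range n ×ˢ Wd n m).image (fun p => p.1 :: p.2)

lemma mem_Wd (n : ℕ) : ∀ (m : ℕ) (l : List ℕ), l ∈ Wd n m ↔ lt n l ∧ l.length = m := by
  intro m
  induction m with
  | zero =>
    intro l
    simp only [Wd, mem_singleton, List.length_eq_zero_iff]
    constructor
    · rintro rfl; simp [lt]
    · exact fun h => h.2
  | succ m ih =>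
    intro l
    simp only [Wd, mem_image, mem_product, mem_range, ih, Prod.exists]
    constructor
    · rintro ⟨a, b, ⟨h1, h2, h3⟩, rfl⟩
      exact ⟨lt_cons.2 ⟨h1, h2⟩, by simp [h3]⟩
    · rintro ⟨h1, h2⟩
      obtain ⟨i, u, rfl⟩ := List.exists_cons_of_length_eq_add_one h2
      rw [lt_cons] at h1
      exact ⟨i, u, ⟨h1.1, h1.2, by simpa using h2⟩, rfl⟩

lemma sum_Wd {M : Type*} [AddCommMonoid M] (n m : ℕ) (g : List ℕ → M) :
    ∑ a ∈ Wd n (m+1), g a = ∑ i ∈ range n, ∑ a ∈ Wd n m, g (i :: a) := by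
  rw [Wd, sum_image, sum_product]
  rintro ⟨a, b⟩ _ ⟨c, d⟩ _ h
  simpa using h

lemma ff_eq (n m : ℕ) : ff n m = ∑ a ∈ Wd n m, op a (ff n 0) := by
  induction m with
  | zero => simp [Wd, op]
  | succ m ih =>
    rw [← sum_dd_ff, sum_Wd]
    refine sum_congr rfl fun k _ => ?_
    rw [ih, map_sum]
    exact sum_congr rfl fun a _ => by rw [op_cons, Module.End.mul_apply]

open scoped Classical in
noncomputable def RR (n : ℕ) : Finset (List ℕ) := (Wd n (n^2)).filter (fun a => wp a = W0 n)

lemma mem_RR {n : ℕ} {l : List ℕ} : l ∈ RR n ↔ lt n l ∧ l.length = n^2 ∧ wp l = W0 n := by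
  classical
  rw [RR, mem_filter, mem_Wd, and_assoc]

lemma wp_coe (l : List ℕ) : (wp l).1 = wordProd l := by
  induction l with
  | nil => rfl
  | cons i l ih =>
    rw [wp_cons]
    change sB i * (wp l).1 = _
    rw [ih]; simp [wordProd]

lemma wp_W0 (n : ℕ) (l : List ℕ) : wp l = W0 n ↔ wordProd l = w0B n := by
  rw [← wp_coe]
  constructor
  · intro h; rw [h]; rfl
  · intro h; exact Subtype.ext h

lemma RSet_eq (n : ℕ) : RSet n (w0B n) = ↑(RR n) := by
  ext l
  rw [mem_coe, mem_RR]
  change (lt n l ∧ wordProd l = w0B n ∧ ∀ l' : List ℕ, lt n l' → wordProd l' = w0B n → l.length ≤ l'.length) ↔ _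
  simp only [← wp_W0]
  have lb : ∀ l, lt n l → wp l = W0 n → n^2 ≤ l.length := by
    intro l h1 h2
    have := LL_wp h1
    rwa [h2, LL_W0] at this
  constructor
  · rintro ⟨h1, h2, h3⟩
    obtain ⟨l', k1, k2, k3⟩ := exists_word n _ (W0 n) (W0_supp n) (LL_W0 n)
    exact ⟨h1, le_antisymm (by rw [← k3]; exact h3 l' k1 k2) (lb l h1 h2), h2⟩
  · rintro ⟨h1, h2, h3⟩
    exact ⟨h1, h3, fun l' k1 k2 => by rw [h2]; exact lb l' k1 k2⟩

lemma RR_nonempty (n : ℕ) : ∃ a, a ∈ RR n := by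
  obtain ⟨l', k1, k2, k3⟩ := exists_word n _ (W0 n) (W0_supp n) (LL_W0 n)
  exact ⟨l', mem_RR.2 ⟨k1, k3, k2⟩⟩

lemma exists_c (n : ℕ) : ∃ c : ℚ, ∀ a, lt n a → a.length = n^2 →
    op a (ff n 0) 1 = open scoped Classical in if wp a = W0 n then c else 0 := by
  obtain ⟨b, hb⟩ := RR_nonempty n
  rw [mem_RR] at hb
  refine ⟨op b (ff n 0) 1, fun a h1 h2 => ?_⟩
  split_ifs with h
  · rw [op_W0 n a b h1 hb.1 h2 hb.2.1 h hb.2.2]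
  · rw [op_ne n a h1 h2 h]; rfl

lemma W0_comm (n i : ℕ) (hi : i < n) : sG i * W0 n = W0 n * sG i := by
  refine sG_ext fun x hx => ?_
  change sB i ((W0 n).1 x) = (W0 n).1 (sB i x)
  rw [W0_apply, W0_apply]
  rcases Nat.eq_zero_or_pos i with rfl | h
  · rw [sB_zero, sB_zero]; split_ifs <;> omega
  · rw [sB_pos i h, sB_pos i h]; split_ifs <;> omega

lemma RR_rotate1 (n : ℕ) (a : List ℕ) (ha : a ∈ RR n) : a.rotate 1 ∈ RR n := by
  rw [mem_RR] at ha ⊢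
  refine ⟨fun i hi => ha.1 i (by simpa using hi), by simpa using ha.2.1, ?_⟩
  obtain ⟨h1, h2, h3⟩ := ha
  cases a with
  | nil => simpa using h3
  | cons i u =>
    rw [lt_cons] at h1
    rw [wp_cons] at h3
    have : wp ((i :: u).rotate 1) = wp u * sG i := by simp [wp]
    rw [this, ← ss i (wp u), h3, W0_comm n i h1.1, mul_assoc, sG_sq, mul_one]

lemma RR_rotate (n j : ℕ) (a : List ℕ) (ha : a ∈ RR n) : a.rotate j ∈ RR n := by
  induction j with
  | zero => simpa using ha
  | succ j ih => rw [← List.rotate_rotate]; exact RR_rotate1 n _ ih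

lemma RR_image (n j : ℕ) : (RR n).image (fun a => a.rotate j) = RR n := by
  refine eq_of_subset_of_card_le ?_ ?_
  · intro a ha
    obtain ⟨b, hb, rfl⟩ := mem_image.1 ha
    exact RR_rotate n j b hb
  · rw [card_image_of_injective _ (List.rotate_injective j)]

lemma isYB_append (a b : List ℕ) (h : 3 ≤ a.length) : isYB (a ++ b) = isYB a := by
  match a, h with
  | x :: y :: z :: t, _ => rfl

lemma isYB_short (a : List ℕ) (h : a.length < 3) : isYB a = false := by
  match a, h with
  | [], _ => rfl
  | [_], _ => rfl
  | [_, _], _ => rfl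

lemma count_rot (n j : ℕ) (hj : j + 3 ≤ n^2) :
    ((RR n).filter (fun a => isYB (a.drop j) = true)).card = ((RR n).filter (fun a => isYB a = true)).card := by
  conv_rhs => rw [← RR_image n j, filter_image, card_image_of_injective _ (List.rotate_injective j)]
  congr 1
  refine filter_congr fun a ha => ?_
  rw [mem_RR] at ha
  rw [List.rotate_eq_drop_append_take (by omega), isYB_append _ _ (by rw [List.length_drop]; omega)]

lemma count_yb (n : ℕ) (hn : 3 ≤ n^2) : ∑ a ∈ RR n, ybCount a = (n^2 - 2) * ((RR n).filter (fun a => isYB a = true)).card := by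
  have h1 : ∀ a ∈ RR n, ybCount a = ∑ j ∈ range (n^2), if isYB (a.drop j) = true then 1 else 0 := by
    intro a ha
    rw [mem_RR] at ha
    rw [ybCount, card_filter, ha.2.1]
  rw [sum_congr rfl h1, sum_comm]
  have h2 : ∀ j, (∑ a ∈ RR n, if isYB (a.drop j) = true then 1 else 0) =
     ((RR n).filter (fun a => isYB (a.drop j) = true)).card := fun j => (card_filter _ _).symm
  simp only [h2]
  rw [← sum_subset (range_subset_range.2 (show n^2 - 2 ≤ n^2 by omega))]
  · rw [sum_congr rfl (fun j hj => count_rot n j (by rw [mem_range] at hj; omega))]; simp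
  · intro j _ hj
    rw [mem_range] at hj
    rw [card_eq_zero, filter_eq_empty_iff]
    intro a ha
    rw [mem_RR] at ha
    rw [isYB_short _ (by rw [List.length_drop]; omega)]; simp

open scoped Classical in
noncomputable def St (n i j h : ℕ) : Finset (List ℕ) :=
  (Wd n (n^2 - 3)).filter (fun b => wp (i :: j :: h :: b) = W0 n)

def key : List ℕ → ℕ
  | a :: b :: _ => min a b
  | _ => 0

lemma Y_eq (n : ℕ) (hn : 3 ≤ n^2) : ((RR n).filter (fun a => isYB a = true)).card =
    ∑ k ∈ Ico 1 (n-1), ((St n k (k+1) k).card + (St n (k+1) k (k+1)).card) := by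
  have form : ∀ a, isYB a = true → ∃ k b, 0 < k ∧ (a = k :: (k+1) :: k :: b ∨ a = (k+1) :: k :: (k+1) :: b) := by
    intro a ha
    match a, ha with
    | x :: y :: z :: t, ha =>
      simp [isYB] at ha
      rcases ha with ⟨⟨h1, h2⟩, h3⟩ | ⟨⟨h1, h2⟩, h3⟩
      · exact ⟨x, t, by omega, Or.inl (by rw [h2, h3])⟩
      · exact ⟨y, t, by omega, Or.inr (by rw [h2, h3])⟩
  rw [card_eq_sum_card_fiberwise (f := key) (t := Ico 1 (n-1))]
  · refine sum_congr rfl fun k hk => ?_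
    rw [mem_Ico] at hk
    rw [← card_image_of_injective (St n k (k+1) k) (f := fun b => k :: (k+1) :: k :: b) (fun a b h => by simpa using h),
      ← card_image_of_injective (St n (k+1) k (k+1)) (f := fun b => (k+1) :: k :: (k+1) :: b) (fun a b h => by simpa using h),
      ← card_union_of_disjoint]
    · congr 1
      ext a
      simp only [mem_filter, mem_union, mem_image, St, mem_RR, mem_Wd]
      constructor
      · rintro ⟨⟨⟨h1, h2, h3⟩, h4⟩, h5⟩
        obtain ⟨k', b, h0, rfl | rfl⟩ := form a h4
        · have : k' = k := by simpa [key] using h5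
          subst this
          simp only [lt_cons, List.length_cons] at h1 h2
          exact Or.inl ⟨b, ⟨⟨h1.2.2.2, by omega⟩, h3⟩, rfl⟩
        · have : k' = k := by simpa [key] using h5
          subst this
          simp only [lt_cons, List.length_cons] at h1 h2
          exact Or.inr ⟨b, ⟨⟨h1.2.2.2, by omega⟩, h3⟩, rfl⟩
      · rintro (⟨b, ⟨⟨h1, h2⟩, h3⟩, rfl⟩ | ⟨b, ⟨⟨h1, h2⟩, h3⟩, rfl⟩)
        · refine ⟨⟨⟨?_, ?_, h3⟩, ?_⟩, by simp [key]⟩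
          · simp only [lt_cons]; exact ⟨by omega, by omega, by omega, h1⟩
          · simp only [List.length_cons]; omega
          · simp [isYB]; omega
        · refine ⟨⟨⟨?_, ?_, h3⟩, ?_⟩, by simp [key]⟩
          · simp only [lt_cons]; exact ⟨by omega, by omega, by omega, h1⟩
          · simp only [List.length_cons]; omega
          · simp [isYB]; omega
    · rw [disjoint_left]
      intro a h1 h2
      obtain ⟨b, _, rfl⟩ := mem_image.1 h1
      obtain ⟨c, _, h⟩ := mem_image.1 h2
      simp at h
  · intro a ha
    simp only [coe_filter, Set.mem_ofPred_eq, mem_RR] at ha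
    obtain ⟨⟨h1, h2, h3⟩, h4⟩ := ha
    obtain ⟨k', b, h0, rfl | rfl⟩ := form a h4
    all_goals
      simp only [lt_cons] at h1
      simp [key]; omega

lemma St_card (n i j h : ℕ) (hi : i < n) (hj : j < n) (hh : h < n) (hn : 3 ≤ n^2) (c : ℚ)
    (hc : ∀ a, lt n a → a.length = n^2 → op a (ff n 0) 1 = open scoped Classical in if wp a = W0 n then c else 0) :
    (St n i j h).card * c = (dd i * dd j * dd h) (ff n (n^2 - 3)) 1 := by
  classical
  rw [ff_eq n (n^2 - 3), map_sum, Finset.sum_apply]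
  have : ∀ b ∈ Wd n (n^2 - 3), (dd i * dd j * dd h) (op b (ff n 0)) 1 =
      if wp (i :: j :: h :: b) = W0 n then c else 0 := by
    intro b hb
    rw [mem_Wd] at hb
    have := hc (i :: j :: h :: b) (by simp only [lt_cons]; exact ⟨hi, hj, hh, hb.1⟩)
      (by simp only [List.length_cons]; omega)
    rw [op_cons, op_cons, op_cons] at this
    convert this using 1
    simp only [Module.End.mul_apply]
  rw [sum_congr rfl this, ← sum_filter, sum_const, nsmul_eq_mul, St]

lemma RR_card (n : ℕ) (c : ℚ)
    (hc : ∀ a, lt n a → a.length = n^2 → op a (ff n 0) 1 = open scoped Classical in if wp a = W0 n then c else 0) :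
    (RR n).card * c = (n^2).factorial * TH lam n := by
  classical
  rw [← ff_top n 1, ff_eq n (n^2), Finset.sum_apply]
  have : ∀ b ∈ Wd n (n^2), op b (ff n 0) 1 = if wp b = W0 n then c else 0 := by
    intro b hb
    rw [mem_Wd] at hb
    convert hc b hb.1 hb.2 using 1
  rw [sum_congr rfl this, ← sum_filter, sum_const, nsmul_eq_mul, RR]

lemma final (n : ℕ) (hn : 3 ≤ n) : n * ∑ a ∈ RR n, ybCount a = (2 * n - 4) * (RR n).card := by
  have h9 : 9 ≤ n^2 := by nlinarith
  obtain ⟨c, hc⟩ := exists_c n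
  have hR := RR_card n c hc
  have hT : 0 < TH lam n := TH_pos (fun i _ j h => by simp [lam]; omega)
  have hc0 : c ≠ 0 := by
    rintro rfl
    rw [mul_zero] at hR
    have : (0 : ℚ) < (n^2).factorial := by exact_mod_cast Nat.factorial_pos _
    nlinarith [mul_pos this hT]
  have hY : (((RR n).filter (fun a => isYB a = true)).card : ℚ) * c =
      2 * (n^2 - 3).factorial * (TH lam n * (n*(n^2-1)*(n-2))) := by
    rw [Y_eq n (by omega), ← final_sum n hn, Nat.cast_sum, sum_mul, mul_sum]
    refine sum_congr rfl fun k hk => ?_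
    rw [mem_Ico] at hk
    have t := triple n k (by omega) (by omega) 1
    rw [Nat.cast_add, add_mul, St_card n k (k+1) k (by omega) (by omega) (by omega) (by omega) c hc,
      St_card n (k+1) k (k+1) (by omega) (by omega) (by omega) (by omega) c hc, ← dd_braid k (by omega), t]
    ring
  have hfac : ((n^2).factorial : ℚ) = n^2 * (n^2-1) * (n^2-2) * (n^2-3).factorial := by
    obtain ⟨m, hm⟩ : ∃ m, n^2 = m + 3 := ⟨n^2-3, by omega⟩
    have hq : (n : ℚ)^2 = m + 3 := by exact_mod_cast hm
    rw [hm, hq, Nat.add_sub_cancel, Nat.factorial_succ, Nat.factorial_succ, Nat.factorial_succ]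
    push_cast; ring
  have key : ((n * ∑ a ∈ RR n, ybCount a : ℕ) : ℚ) = ((2 * n - 4) * (RR n).card : ℕ) := by
    rw [count_yb n (by omega)]
    apply mul_right_cancel₀ hc0
    push_cast [Nat.cast_sub (show 2 ≤ n^2 by omega), Nat.cast_sub (show 4 ≤ 2 * n by omega)]
    rw [hfac] at hR
    linear_combination (n : ℚ) * (n^2 - 2) * hY - (2 * n - 4) * hR
  exact_mod_cast key

end YB

end

/-- For every `n ≥ 3`, the expected number of Yang–Baxter moves in a uniformly random
reduced decomposition of the longest element `w₀ᴮ ∈ Bₙ` equals `2 - 4/n`; equivalently,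
`n · Σ_{ω ∈ R(w₀ᴮ)} yb(ω) = (2n - 4) · |R(w₀ᴮ)|`. -/
theorem expected_yang_baxter_B (n : ℕ) (hn : 3 ≤ n) :
    n * ∑ᶠ ω ∈ RSet n (w0B n), ybCount ω
      = (2 * n - 4) * Nat.card ↥(RSet n (w0B n)) := by
  have h := YB.final n hn
  rw [YB.RSet_eq, finsum_mem_coe_finset, h]
  simp
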